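/- Let K be a number field. Then the set {(a₁, a₂) ∈ K² : the equation a₁x₁² + a₂x₂² = 0 has only the trivial solution x₁ = x₂ = 0 in K} is diophantine over K. -/

import Mathlib

/-- A subset `S ⊆ K^ι` is diophantine over `K` if there are `m ∈ ℕ` and a polynomial
`f` in the variables `y_i` (`i : ι`) and `x_1, …, x_m` with coefficients in `K` such that
`a ∈ S` iff `f(a, x) = 0` has a solution `x ∈ K^m`. -/
def IsDiophantine {K : Type*} [Field K] {ι : Type*} [Fintype ι] (S : Set (ι → K)) : Prop :=
  ∃ (m : ℕ) (f : MvPolynomial (ι ⊕ Fin m) K),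
    ∀ a : ι → K, a ∈ S ↔ ∃ x : Fin m → K, MvPolynomial.eval (Sum.elim a x) f = 0

/-!
The form `a₁x₁² + a₂x₂²` is anisotropic iff `α = -a₁a₂` is not a square, so the task is to express
nonsquareness by polynomial equations.

Choose primes `a, b ≡ 1 mod 8` with `b ≡ 1 mod a` such that `a`, `b` and `ab` are not squares in
`K`, and let `V ⊆ Kˣ` be the group generated by the norms from `K(√a)`, `K(√b)` and `K(√ab)`.
Every prime splits in one of these three fields up to ramification, and therefore `V` has finite
index. If `α ≠ 0` is a square, all norms from `K(√(aα))` are norms from `K(√a)`, hence lie in `V`.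
If `α` is not a square, some norm from `K(√(aα))` lies outside `V`, unless `α` is in the class of
`a`, `b` or `ab` modulo squares. Being outside `V` means lying in one of finitely many cosets of
`V`, each of which is the image of a polynomial map, up to the condition of being nonzero. Hence
nonsquareness is diophantine.

A norm outside `V` is detected by the completely multiplicative function on ideals that is `1` at
the primes modulo which `a` or `b` is a square and `-1` at the others. It is compatible with norms
of ideals and, by quadratic reciprocity over `ℚ`, trivial on the principal ideals of every field
that contains `√a`, `√b` or `√(ab)`; hence it is trivial on `V`. If it were trivial on the norms
from `L = K(√(aα))`, it would be a character of the class group of `L`, so its mean value over the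
primes of `L` would be `1` or at most `0`, whereas its definition gives the mean value `1/2`. Here
the mean value is read off from logarithms of Dirichlet series as `s → 1⁺`, using that the partial
zeta functions of the ideal classes differ by bounded functions.
-/

namespace BinaryForms

open Filter Topology Module Asymptotics

section LatticeBump

/-- The tent function, the standard piecewise linear bump supported on `[-1, 1]`. Its integer
translates form a partition of unity of `ℝ`. -/
noncomputable def tent (t : ℝ) : ℝ := max 0 (1 - |t|)

lemma tent_nonneg (t : ℝ) : 0 ≤ tent t := le_max_left _ _

lemma tent_le_one (t : ℝ) : tent t ≤ 1 := max_le zero_le_one (by linarith [abs_nonneg t])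

lemma abs_le_one_of_tent_ne_zero {t : ℝ} (h : tent t ≠ 0) : |t| ≤ 1 := by
  by_contra! ht
  exact h (max_eq_left (by linarith))

lemma abs_tent_sub_tent_le (s t : ℝ) : |tent s - tent t| ≤ |s - t| := by
  have h := abs_max_sub_max_le_max 0 (1 - |s|) 0 (1 - |t|)
  rw [sub_self, abs_zero, max_eq_right (abs_nonneg (1 - |s| - (1 - |t|))),
    sub_sub_sub_cancel_left] at h
  exact h.trans ((abs_abs_sub_abs_le_abs_sub t s).trans_eq (abs_sub_comm t s))

lemma sum_tent_int_add (t : ℝ) : ∑ k ∈ ({-⌊t⌋, -⌊t⌋ - 1} : Finset ℤ), tent (k + t) = 1 := by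
  have h₁ := Int.floor_le t
  have h₂ := Int.lt_floor_add_one t
  rw [Finset.sum_pair (by lia), tent, tent]
  push_cast
  rw [abs_of_nonneg (by linarith), abs_of_nonpos (by linarith), max_eq_right (by linarith),
    max_eq_right (by linarith)]
  ring

lemma tent_int_add_eq_zero {t : ℝ} {k : ℤ} (hk : k ∉ ({-⌊t⌋, -⌊t⌋ - 1} : Finset ℤ)) :
    tent (k + t) = 0 := by
  by_contra h
  obtain ⟨h₁, h₂⟩ := abs_le.mp (abs_le_one_of_tent_ne_zero h)
  have hlt : |(k : ℝ) + t| ≠ 1 := fun h' => h (by simp [tent, h'])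
  have hk₁ : -k ≤ ⌊t⌋ + 1 := by
    have : ((-k : ℤ) : ℝ) < (⌊t⌋ + 2 : ℤ) := by push_cast; linarith [Int.lt_floor_add_one t]
    have := Int.cast_lt.mp this
    lia
  have hk₂ : ⌊t⌋ ≤ 1 - k := by
    have : ((⌊t⌋ : ℤ) : ℝ) ≤ (1 - k : ℤ) := by push_cast; linarith [Int.floor_le t]
    exact Int.cast_le.mp this
  have hk₃ : k = 1 - ⌊t⌋ := by grind
  refine hlt (le_antisymm (abs_le.mpr ⟨h₁, h₂⟩) ?_)
  rw [hk₃]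
  push_cast
  exact (by linarith [Int.floor_le t] : (1 : ℝ) ≤ 1 - ⌊t⌋ + t).trans (le_abs_self _)

lemma abs_prod_tent_sub_prod_tent_le {ι : Type*} (s : Finset ι) (f g : ι → ℝ) :
    |∏ i ∈ s, tent (f i) - ∏ i ∈ s, tent (g i)| ≤ ∑ i ∈ s, |f i - g i| := by
  classical
  induction s using Finset.induction_on with
  | empty => simp
  | insert a s ha ih =>
    have hf₀ : 0 ≤ ∏ i ∈ s, tent (f i) := Finset.prod_nonneg fun i _ => tent_nonneg _
    have hf₁ : ∏ i ∈ s, tent (f i) ≤ 1 :=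
      Finset.prod_le_one (fun i _ => tent_nonneg _) fun i _ => tent_le_one _
    rw [Finset.prod_insert ha, Finset.prod_insert ha, Finset.sum_insert ha]
    calc |tent (f a) * ∏ i ∈ s, tent (f i) - tent (g a) * ∏ i ∈ s, tent (g i)|
        = |(tent (f a) - tent (g a)) * ∏ i ∈ s, tent (f i)
          + tent (g a) * (∏ i ∈ s, tent (f i) - ∏ i ∈ s, tent (g i))| := by congr 1; ring
      _ ≤ |tent (f a) - tent (g a)| * 1
          + 1 * |∏ i ∈ s, tent (f i) - ∏ i ∈ s, tent (g i)| := by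
        refine (abs_add_le _ _).trans ?_
        rw [abs_mul, abs_mul, abs_of_nonneg hf₀, abs_of_nonneg (tent_nonneg (g a))]
        gcongr
        exact tent_le_one _
      _ ≤ |f a - g a| + ∑ i ∈ s, |f i - g i| := by
        rw [mul_one, one_mul]
        exact add_le_add (abs_tent_sub_tent_le _ _) ih

variable {ι E : Type*} [Fintype ι] [NormedAddCommGroup E] [NormedSpace ℝ E] (b : Basis ι ℝ E)

/-- A product of tent functions in the coordinates of the basis `b`. Its translates by the lattice
spanned by `b` form a Lipschitz, compactly supported partition of unity of the whole space. -/
noncomputable def latticeBump (v : E) : ℝ := ∏ i, tent (b.repr v i)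

lemma latticeBump_nonneg (v : E) : 0 ≤ latticeBump b v :=
  Finset.prod_nonneg fun _ _ => tent_nonneg _

lemma latticeBump_le_one (v : E) : latticeBump b v ≤ 1 :=
  Finset.prod_le_one (fun _ _ => tent_nonneg _) fun _ _ => tent_le_one _

lemma norm_le_of_latticeBump_ne_zero {v : E} (hv : latticeBump b v ≠ 0) : ‖v‖ ≤ ∑ i, ‖b i‖ := by
  rw [latticeBump, Finset.prod_ne_zero_iff] at hv
  conv_lhs => rw [← b.sum_repr v]
  refine (norm_sum_le _ _).trans (Finset.sum_le_sum fun i hi => ?_)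
  rw [norm_smul, Real.norm_eq_abs]
  exact mul_le_of_le_one_left (norm_nonneg _) (abs_le_one_of_tent_ne_zero (hv i hi))

lemma exists_abs_latticeBump_sub_le :
    ∃ C : ℝ, 0 ≤ C ∧ ∀ v w, |latticeBump b v - latticeBump b w| ≤ C * ‖v - w‖ := by
  have := b.finiteDimensional_of_finite
  let T : E →L[ℝ] ι → ℝ := b.equivFunL
  refine ⟨Fintype.card ι * ‖T‖, by positivity, fun v w => ?_⟩
  have hT (i : ι) : |b.repr v i - b.repr w i| ≤ ‖T‖ * ‖v - w‖ :=
    calc |b.repr v i - b.repr w i| = ‖T (v - w) i‖ := by simp [T]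
      _ ≤ ‖T (v - w)‖ := norm_le_pi_norm _ i
      _ ≤ ‖T‖ * ‖v - w‖ := T.le_opNorm _
  calc |latticeBump b v - latticeBump b w| ≤ ∑ i, |b.repr v i - b.repr w i| :=
        abs_prod_tent_sub_prod_tent_le _ _ _
    _ ≤ ∑ _i : ι, ‖T‖ * ‖v - w‖ := Finset.sum_le_sum fun i _ => hT i
    _ = Fintype.card ι * ‖T‖ * ‖v - w‖ := by simp [mul_assoc]

lemma hasSum_latticeBump (v : E) :
    HasSum (fun k : ι → ℤ => latticeBump b (∑ i, (k i : ℝ) • b i + v)) 1 := by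
  classical
  have hsum : ∑ k ∈ Fintype.piFinset fun i => ({-⌊b.repr v i⌋, -⌊b.repr v i⌋ - 1} : Finset ℤ),
      ∏ i, tent (k i + b.repr v i) = 1 := by
    rw [← Finset.prod_univ_sum _ fun i (k : ℤ) => tent (k + b.repr v i)]
    simp only [sum_tent_int_add, Finset.prod_const_one]
  have hrepr (k : ι → ℤ) :
      latticeBump b (∑ i, (k i : ℝ) • b i + v) = ∏ i, tent (k i + b.repr v i) := by
    simp only [latticeBump, map_add, Finsupp.add_apply, Basis.repr_sum_self]
  simp only [hrepr]
  rw [← hsum]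
  refine hasSum_sum_of_ne_finset_zero fun k hk => ?_
  obtain ⟨i, hi⟩ : ∃ i, k i ∉ ({-⌊b.repr v i⌋, -⌊b.repr v i⌋ - 1} : Finset ℤ) := by
    simpa only [Fintype.mem_piFinset, not_forall] using hk
  exact Finset.prod_eq_zero (Finset.mem_univ i) (tent_int_add_eq_zero hi)

end LatticeBump

section UnitBump

open NumberField NumberField.Units NumberField.Units.dirichletUnitTheorem

variable (K : Type*) [Field K] [NumberField K]

open Classical in
/-- The logarithmic embeddings of the fundamental units, as a real basis of the logarithmic
space. -/
noncomputable def logUnitBasis : Basis (Fin (rank K)) ℝ (logSpace K) :=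
  (basisUnitLattice K).ofZLatticeBasis ℝ _

/-- Dirichlet's unit theorem, as a parametrization of the units by the fundamental system. -/
noncomputable def torsionProdIntEquivUnits : torsion K × (Fin (rank K) → ℤ) ≃ (𝓞 K)ˣ :=
  Equiv.ofBijective (fun p => p.1 * ∏ i, fundSystem K i ^ p.2 i) <| by
    refine (Function.bijective_iff_existsUnique _).mpr fun u => ?_
    obtain ⟨p, hp, hunique⟩ := exist_unique_eq_mul_prod K u
    exact ⟨p, hp.symm, fun q hq => hunique q hq.symm⟩

lemma logEmbedding_torsionProdIntEquivUnits (p : torsion K × (Fin (rank K) → ℤ)) :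
    logEmbedding K (Additive.ofMul (torsionProdIntEquivUnits K p)) =
      ∑ i, (p.2 i : ℝ) • logUnitBasis K i := by
  have h : torsionProdIntEquivUnits K p = p.1 * ∏ i, fundSystem K i ^ p.2 i := rfl
  rw [h, ofMul_mul, map_add, logEmbedding_eq_zero_iff.mpr p.1.2, zero_add, ofMul_prod, map_sum]
  refine Finset.sum_congr rfl fun i _ => ?_
  rw [ofMul_zpow, map_zsmul, logEmbedding_fundSystem, ← Int.cast_smul_eq_zsmul ℝ, logUnitBasis,
    Basis.ofZLatticeBasis_apply]

open Classical in
lemma hasSum_latticeBump_logEmbedding_add (v : logSpace K) :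
    HasSum (fun u : (𝓞 K)ˣ =>
      latticeBump (logUnitBasis K) (logEmbedding K (Additive.ofMul u) + v)) (torsionOrder K) := by
  have htorsion : HasSum (fun _ : torsion K => (1 : ℝ)) (torsionOrder K) := by
    have := Fintype.ofFinite (torsion K)
    simpa [torsionOrder, Nat.card_eq_fintype_card] using
      hasSum_fintype fun _ : torsion K => (1 : ℝ)
  have hbump := hasSum_latticeBump (logUnitBasis K) v
  have hprod := htorsion.mul hbump
    (summable_mul_of_summable_norm (f := fun _ : torsion K => (1 : ℝ))
      (g := fun k : Fin (rank K) → ℤ =>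
        latticeBump (logUnitBasis K) (∑ i, (k i : ℝ) • logUnitBasis K i + v))
      htorsion.summable.norm hbump.summable.norm)
  rw [← (torsionProdIntEquivUnits K).hasSum_iff]
  simpa only [Function.comp_def, logEmbedding_torsionProdIntEquivUnits, one_mul, mul_one]
    using hprod

end UnitBump

section Perturbation

open NumberField NumberField.Units NumberField.Units.dirichletUnitTheorem NumberField.mixedEmbedding
  NumberField.mixedEmbedding.fundamentalCone NumberField.InfinitePlace

variable {K : Type*} [Field K]

lemma abs_normAtPlace_add_sub_le (w : InfinitePlace K) (X Y : mixedSpace K) :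
    |normAtPlace w (X + Y) - normAtPlace w X| ≤ normAtPlace w Y := by
  have h := normAtPlace_add_le w (X + Y) (-Y)
  rw [normAtPlace_neg, add_neg_cancel_right] at h
  rw [abs_le]
  constructor <;> linarith [normAtPlace_add_le w X Y]

lemma one_le_mult_cast (w : InfinitePlace K) : (1 : ℝ) ≤ mult w := mod_cast mult_pos (w := w)

variable [NumberField K]

open Classical in
lemma normAtPlace_le_norm (w : InfinitePlace K) (X : mixedSpace K) : normAtPlace w X ≤ ‖X‖ := by
  rw [norm_eq_sup'_normAtPlace]
  exact Finset.le_sup' (fun w => normAtPlace w X) (Finset.mem_univ w)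

open Classical in
lemma exists_normAtPlace_eq_norm (X : mixedSpace K) : ∃ w, normAtPlace w X = ‖X‖ := by
  rw [norm_eq_sup'_normAtPlace]
  obtain ⟨w, -, hw⟩ :=
    Finset.exists_mem_eq_sup' Finset.univ_nonempty fun w : InfinitePlace K => normAtPlace w X
  exact ⟨w, hw.symm⟩

lemma log_norm_eq_sum {X : mixedSpace K} (hX : mixedEmbedding.norm X ≠ 0) :
    Real.log (mixedEmbedding.norm X) = ∑ w, (mult w : ℝ) * Real.log (normAtPlace w X) := by
  rw [mixedEmbedding.norm_apply,
    Real.log_prod fun w _ => pow_ne_zero _ (mixedEmbedding.norm_ne_zero_iff.mp hX w)]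
  simp only [Real.log_pow]

lemma sum_mult_cast_eq : ∑ w : InfinitePlace K, (mult w : ℝ) = finrank ℚ K := mod_cast sum_mult_eq

open Classical in
lemma abs_log_normAtPlace_sub_le {X : mixedSpace K} (hX : mixedEmbedding.norm X ≠ 0) {C : ℝ}
    (hC : ‖logMap X‖ ≤ C) (w : InfinitePlace K) :
    |Real.log (normAtPlace w X) - Real.log (mixedEmbedding.norm X) * (finrank ℚ K : ℝ)⁻¹| ≤
      Fintype.card (InfinitePlace K) * C := by
  set c := Real.log (mixedEmbedding.norm X) * (finrank ℚ K : ℝ)⁻¹ with hc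
  have hsum : ∑ w, (mult w : ℝ) * (Real.log (normAtPlace w X) - c) = 0 := by
    have : (finrank ℚ K : ℝ) ≠ 0 := mod_cast finrank_pos.ne'
    simp_rw [mul_sub]
    rw [Finset.sum_sub_distrib, ← log_norm_eq_sum hX, ← Finset.sum_mul, sum_mult_cast_eq, hc]
    field_simp
    ring
  have hne {v : InfinitePlace K} (hv : v ≠ w₀) :
      |(mult v : ℝ) * (Real.log (normAtPlace v X) - c)| ≤ C := by
    have h := (norm_le_pi_norm (logMap X) ⟨v, hv⟩).trans hC
    rwa [logMap_apply, Real.norm_eq_abs] at h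
  have hC₀ : 0 ≤ C := (norm_nonneg _).trans hC
  have hmult : |Real.log (normAtPlace w X) - c| ≤
      |(mult w : ℝ) * (Real.log (normAtPlace w X) - c)| := by
    rw [abs_mul, Nat.abs_cast]
    exact le_mul_of_one_le_left (abs_nonneg _) (one_le_mult_cast w)
  refine hmult.trans ?_
  by_cases hw : w = w₀
  · rw [hw]
    rw [← Finset.add_sum_erase _ _ (Finset.mem_univ w₀)] at hsum
    rw [eq_neg_of_add_eq_zero_left hsum, abs_neg]
    calc _ ≤ ∑ v ∈ Finset.univ.erase w₀, |(mult v : ℝ) * (Real.log (normAtPlace v X) - c)| :=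
          Finset.abs_sum_le_sum_abs _ _
      _ ≤ (Finset.univ.erase (w₀ : InfinitePlace K)).card • C :=
          Finset.sum_le_card_nsmul _ _ C fun v hv => hne (Finset.ne_of_mem_erase hv)
      _ ≤ Fintype.card (InfinitePlace K) * C := by
          rw [nsmul_eq_mul]
          gcongr
          exact Finset.card_le_univ _
  · exact (hne hw).trans (le_mul_of_one_le_left hC₀ (mod_cast Fintype.card_pos))

open Classical in
lemma exists_mul_norm_le_normAtPlace (C : ℝ) : ∃ κ : ℝ, 0 < κ ∧ ∀ X : mixedSpace K,
    mixedEmbedding.norm X ≠ 0 → ‖logMap X‖ ≤ C → ∀ w, κ * ‖X‖ ≤ normAtPlace w X := by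
  set D : ℝ := Fintype.card (InfinitePlace K) * C
  refine ⟨Real.exp (-(2 * D)), Real.exp_pos _, fun X hX hC w => ?_⟩
  have hpos (v : InfinitePlace K) : 0 < normAtPlace v X :=
    (normAtPlace_nonneg v X).lt_of_ne' (mixedEmbedding.norm_ne_zero_iff.mp hX v)
  obtain ⟨v, hv⟩ := exists_normAtPlace_eq_norm X
  have hvc := abs_le.mp (abs_log_normAtPlace_sub_le hX hC v)
  have hwc := abs_le.mp (abs_log_normAtPlace_sub_le hX hC w)
  rw [← hv, ← Real.exp_log (hpos v), ← Real.exp_log (hpos w), ← Real.exp_add, Real.exp_le_exp]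
  linarith

lemma abs_log_sub_log_le {a b : ℝ} (ha : 0 < a) (h : |b - a| ≤ a / 2) :
    |Real.log b - Real.log a| ≤ 2 * |b - a| / a := by
  have h' := abs_le.mp h
  have hb : 0 < b := by linarith
  have hba : Real.log b - Real.log a ≤ b / a - 1 := by
    rw [← Real.log_div hb.ne' ha.ne']
    exact Real.log_le_sub_one_of_pos (by positivity)
  have hab : Real.log a - Real.log b ≤ a / b - 1 := by
    rw [← Real.log_div ha.ne' hb.ne']
    exact Real.log_le_sub_one_of_pos (by positivity)
  have hba' : b / a - 1 ≤ 2 * |b - a| / a := by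
    rw [div_sub_one ha.ne']
    gcongr
    linarith [le_abs_self (b - a), abs_nonneg (b - a)]
  have hab' : a / b - 1 ≤ 2 * |b - a| / a := by
    rw [div_sub_one hb.ne', div_le_div_iff₀ hb ha]
    nlinarith [neg_le_abs (b - a), abs_nonneg (b - a)]
  rw [abs_le]
  constructor <;> linarith

variable {κ : ℝ} {X Y : mixedSpace K}

open Classical in
lemma norm_add_ne_zero (hX : 0 < κ * ‖X‖) (hbal : ∀ w, κ * ‖X‖ ≤ normAtPlace w X)
    (hY : ‖Y‖ ≤ κ / 2 * ‖X‖) : mixedEmbedding.norm (X + Y) ≠ 0 := by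
  refine mixedEmbedding.norm_ne_zero_iff.mpr fun w => ne_of_gt ?_
  have h := abs_le.mp ((abs_normAtPlace_add_sub_le w X Y).trans (normAtPlace_le_norm w Y))
  linarith [hbal w]

open Classical in
lemma abs_log_normAtPlace_add_sub_le (hX : 0 < κ * ‖X‖)
    (hbal : ∀ w, κ * ‖X‖ ≤ normAtPlace w X) (hY : ‖Y‖ ≤ κ / 2 * ‖X‖) (w : InfinitePlace K) :
    |Real.log (normAtPlace w (X + Y)) - Real.log (normAtPlace w X)| ≤
      2 * ‖Y‖ / (κ * ‖X‖) := by
  have hsub := (abs_normAtPlace_add_sub_le w X Y).trans (normAtPlace_le_norm w Y)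
  calc _ ≤ 2 * |normAtPlace w (X + Y) - normAtPlace w X| / normAtPlace w X :=
        abs_log_sub_log_le (hX.trans_le (hbal w)) (by linarith [hbal w])
    _ ≤ 2 * ‖Y‖ / (κ * ‖X‖) := by
        gcongr
        exact hbal w

open Classical in
lemma abs_log_norm_add_sub_le (hX : 0 < κ * ‖X‖) (hbal : ∀ w, κ * ‖X‖ ≤ normAtPlace w X)
    (hY : ‖Y‖ ≤ κ / 2 * ‖X‖) :
    |Real.log (mixedEmbedding.norm (X + Y)) - Real.log (mixedEmbedding.norm X)| ≤
      finrank ℚ K * (2 * ‖Y‖ / (κ * ‖X‖)) := by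
  have hX' : mixedEmbedding.norm X ≠ 0 :=
    mixedEmbedding.norm_ne_zero_iff.mpr fun w => (hX.trans_le (hbal w)).ne'
  rw [log_norm_eq_sum hX', log_norm_eq_sum (norm_add_ne_zero hX hbal hY), ← Finset.sum_sub_distrib,
    ← sum_mult_cast_eq, Finset.sum_mul]
  refine (Finset.abs_sum_le_sum_abs _ _).trans (Finset.sum_le_sum fun w _ => ?_)
  rw [← mul_sub, abs_mul, Nat.abs_cast]
  exact mul_le_mul_of_nonneg_left (abs_log_normAtPlace_add_sub_le hX hbal hY w) (Nat.cast_nonneg _)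

open Classical in
lemma norm_logMap_add_sub_le (hX : 0 < κ * ‖X‖) (hbal : ∀ w, κ * ‖X‖ ≤ normAtPlace w X)
    (hY : ‖Y‖ ≤ κ / 2 * ‖X‖) :
    ‖logMap (X + Y) - logMap X‖ ≤ finrank ℚ K * (4 * ‖Y‖ / (κ * ‖X‖)) := by
  have hn : (0 : ℝ) < finrank ℚ K := mod_cast finrank_pos
  have hmult (w : InfinitePlace K) : (mult w : ℝ) ≤ finrank ℚ K := by
    rw [← sum_mult_cast_eq]
    exact Finset.single_le_sum (f := fun w : InfinitePlace K => (mult w : ℝ))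
      (fun w _ => by positivity) (Finset.mem_univ w)
  rw [pi_norm_le_iff_of_nonneg (by positivity)]
  intro w
  set n : ℝ := (finrank ℚ K : ℝ)
  rw [Pi.sub_apply, logMap_apply, logMap_apply, Real.norm_eq_abs, ← mul_sub, abs_mul, Nat.abs_cast]
  refine mul_le_mul (hmult _) ?_ (abs_nonneg _) hn.le
  have hnorm : |(Real.log (mixedEmbedding.norm (X + Y)) - Real.log (mixedEmbedding.norm X)) * n⁻¹| ≤
      2 * ‖Y‖ / (κ * ‖X‖) := by
    rw [abs_mul, abs_of_pos (inv_pos.mpr hn), ← div_eq_mul_inv, div_le_iff₀' hn]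
    exact abs_log_norm_add_sub_le hX hbal hY
  calc _ = |Real.log (normAtPlace w.1 (X + Y)) - Real.log (normAtPlace w.1 X) -
        (Real.log (mixedEmbedding.norm (X + Y)) - Real.log (mixedEmbedding.norm X)) * n⁻¹| := by
        congr 1; ring
    _ ≤ 2 * ‖Y‖ / (κ * ‖X‖) + 2 * ‖Y‖ / (κ * ‖X‖) :=
        (abs_sub _ _).trans (add_le_add (abs_log_normAtPlace_add_sub_le hX hbal hY w.1) hnorm)
    _ = 4 * ‖Y‖ / (κ * ‖X‖) := by ring

open Classical in
lemma pow_le_norm (hX : 0 ≤ κ * ‖X‖) (hbal : ∀ w, κ * ‖X‖ ≤ normAtPlace w X) :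
    (κ * ‖X‖) ^ finrank ℚ K ≤ mixedEmbedding.norm X := by
  rw [mixedEmbedding.norm_apply, ← sum_mult_eq (K := K), ← Finset.prod_pow_eq_pow_sum]
  exact Finset.prod_le_prod (fun w _ => pow_nonneg hX _) fun w _ => pow_le_pow_left₀ hX (hbal w) _

end Perturbation

lemma exists_abs_index_mul_tsum_sub_tsum_le {G T : Type*} [AddGroup G] (A : AddSubgroup G)
    [A.FiniteIndex] {S : Set T} {g : T → G → ℝ}
    (hg : ∀ r, ∃ w : G → ℝ, Summable w ∧ ∀ s ∈ S, ∀ x, |g s (x + r) - g s x| ≤ w x) :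
    ∃ C : ℝ, ∀ s ∈ S, Summable (g s) → |A.index * ∑' a : A, g s a - ∑' x, g s x| ≤ C := by
  choose w hw hgw using hg
  obtain ⟨R, hR, -⟩ := A.exists_isComplement_right 0
  have : Finite R := hR.finite_right
  have : Fintype R := Fintype.ofFinite R
  refine ⟨∑ r : R, ∑' a : A, w r a, fun s hs hsum => ?_⟩
  have hcoset (r : G) : Summable fun a : A => g s (a + r) :=
    hsum.comp_injective ((add_left_injective r).comp Subtype.val_injective)
  have hA : Summable fun a : A => g s a := hsum.comp_injective Subtype.val_injective
  have htsum : ∑' x, g s x = ∑ r : R, ∑' a : A, g s (a + r) := by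
    let e : R × A ≃ G := (Equiv.prodComm _ _).trans (Equiv.ofBijective _ hR)
    have he : Summable fun p : R × A => g s (p.2 + p.1) := e.summable_iff.mpr hsum
    rw [← e.tsum_eq, ← tsum_fintype (L := .unconditional R)]
    exact he.tsum_prod
  have hindex : (A.index : ℝ) * ∑' a : A, g s a = ∑ _r : R, ∑' a : A, g s a := by
    rw [Finset.sum_const, nsmul_eq_mul, ← hR.card_right, Finset.card_univ, Nat.card_eq_fintype_card]
  rw [hindex, htsum, ← Finset.sum_sub_distrib]
  refine (Finset.abs_sum_le_sum_abs _ _).trans (Finset.sum_le_sum fun r _ => ?_)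
  rw [abs_sub_comm, ← (hcoset r).tsum_sub hA]
  exact tsum_of_norm_bounded (f := fun a : A => g s (a + r) - g s a)
    ((hw r).comp_injective Subtype.val_injective).hasSum fun a => hgw r s hs a

section UnitWeight

open NumberField NumberField.mixedEmbedding NumberField.mixedEmbedding.fundamentalCone

variable {K : Type*} [Field K] [NumberField K]

open Classical in
/-- The function `X ↦ N(X)⁻ˢ` on the mixed space, cut off by a bump function in the logarithmic
direction so that summing over a unit orbit gives back a multiple of `N(X)⁻ˢ`
(see `hasSum_unitWeight_span_eq`). -/
noncomputable def unitWeight (s : ℝ) (X : mixedSpace K) : ℝ :=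
  latticeBump (logUnitBasis K) (logMap X) * mixedEmbedding.norm X ^ (-s)

open Classical in
lemma unitWeight_nonneg (s : ℝ) (X : mixedSpace K) : 0 ≤ unitWeight s X :=
  mul_nonneg (latticeBump_nonneg _ _) (Real.rpow_nonneg (mixedEmbedding.norm_nonneg X) _)

open Classical in
lemma unitWeight_le_one {s : ℝ} (hs : 0 ≤ s) {X : mixedSpace K} (hX : 1 ≤ mixedEmbedding.norm X) :
    unitWeight s X ≤ 1 :=
  mul_le_one₀ (latticeBump_le_one _ _) (Real.rpow_nonneg (mixedEmbedding.norm_nonneg X) _)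
    (Real.rpow_le_one_of_one_le_of_nonpos hX (by linarith))

lemma abs_mul_rpow_neg_sub_le {a b p q s δ ε : ℝ} (ha : 1 ≤ a) (hb : 0 < b)
    (hs : s ∈ Set.Icc (1 : ℝ) 2) (hp : |p| ≤ 1) (hlog : |Real.log b - Real.log a| ≤ δ)
    (hδ : δ ≤ 1 / 2) (hqp : |q - p| ≤ ε) :
    |q * b ^ (-s) - p * a ^ (-s)| ≤ (3 * ε + 4 * δ) / a := by
  obtain ⟨hs₁, hs₂⟩ := hs
  have ha₀ : 0 < a := by linarith
  set u := -s * (Real.log b - Real.log a) with hu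
  have hu_le : |u| ≤ 2 * δ := by
    rw [hu, abs_mul, abs_neg, abs_of_nonneg (by linarith)]
    exact mul_le_mul hs₂ hlog (abs_nonneg _) (by norm_num)
  have hexp : |Real.exp u - 1| ≤ 4 * δ := by
    linarith [Real.abs_exp_sub_one_le (hu_le.trans (by linarith))]
  have hexp' : |Real.exp u| ≤ 3 := by
    rw [abs_of_pos (Real.exp_pos _)]
    linarith [(abs_le.mp hexp).2]
  have hbu : b ^ (-s) = a ^ (-s) * Real.exp u := by
    rw [Real.rpow_def_of_pos ha₀, Real.rpow_def_of_pos hb, ← Real.exp_add, hu]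
    ring_nf
  have has : a ^ (-s) ≤ a⁻¹ := by
    rw [← Real.rpow_neg_one]
    exact Real.rpow_le_rpow_of_exponent_le ha (by linarith)
  have hε : 0 ≤ ε := (abs_nonneg _).trans hqp
  calc |q * b ^ (-s) - p * a ^ (-s)|
      = |(q - p) * Real.exp u + p * (Real.exp u - 1)| * a ^ (-s) := by
        rw [← abs_of_nonneg (Real.rpow_nonneg ha₀.le (-s)), ← abs_mul,
          abs_of_nonneg (Real.rpow_nonneg ha₀.le (-s)), hbu]
        ring_nf
    _ ≤ (ε * 3 + 1 * (4 * δ)) * a⁻¹ := by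
        refine mul_le_mul ((abs_add_le _ _).trans ?_) has (Real.rpow_nonneg ha₀.le _) (by
          linarith [abs_nonneg (Real.exp u - 1)])
        rw [abs_mul, abs_mul]
        gcongr
    _ = (3 * ε + 4 * δ) / a := by ring

variable (K)

open Classical in
lemma exists_abs_unitWeight_add_sub_le_of_ne_zero : ∃ κ C : ℝ, 0 < κ ∧ 0 ≤ C ∧
    ∀ s ∈ Set.Icc (1 : ℝ) 2, ∀ X Y : mixedSpace K, 1 ≤ mixedEmbedding.norm X →
      unitWeight s X ≠ 0 → ‖Y‖ ≤ κ * ‖X‖ →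
      |unitWeight s (X + Y) - unitWeight s X| ≤ C * ‖Y‖ / ‖X‖ ^ (finrank ℚ K + 1) := by
  obtain ⟨κ, hκ, hbal⟩ := exists_mul_norm_le_normAtPlace (K := K) (∑ i, ‖logUnitBasis K i‖)
  obtain ⟨L, hL, hlip⟩ := exists_abs_latticeBump_sub_le (logUnitBasis K)
  set n : ℝ := (finrank ℚ K : ℝ)
  have hn₁ : 1 ≤ n := Nat.one_le_cast.mpr finrank_pos
  refine ⟨κ / (4 * n), (12 * L + 8) * n / κ / κ ^ finrank ℚ K, by positivity, by positivity,
    fun s hs X Y hX hW hY => ?_⟩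
  have hX₀ : 0 < ‖X‖ := norm_pos_iff.mpr fun h => by simp [h] at hX; linarith
  have hκX : 0 < κ * ‖X‖ := by positivity
  have hbalX := hbal X (by linarith) (norm_le_of_latticeBump_ne_zero _ (left_ne_zero_of_mul hW))
  have hY' : ‖Y‖ ≤ κ / 2 * ‖X‖ := hY.trans (by gcongr; linarith)
  have hb : 0 < mixedEmbedding.norm (X + Y) :=
    (mixedEmbedding.norm_nonneg _).lt_of_ne' (norm_add_ne_zero hκX hbalX hY')
  have hδ : n * (2 * ‖Y‖ / (κ * ‖X‖)) ≤ 1 / 2 := by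
    rw [mul_div_assoc', div_le_iff₀ hκX]
    calc n * (2 * ‖Y‖) ≤ n * (2 * (κ / (4 * n) * ‖X‖)) := by gcongr
      _ = 1 / 2 * (κ * ‖X‖) := by field_simp; ring
  have hbump : |latticeBump (logUnitBasis K) (logMap (X + Y)) -
      latticeBump (logUnitBasis K) (logMap X)| ≤ L * (n * (4 * ‖Y‖ / (κ * ‖X‖))) :=
    (hlip _ _).trans (mul_le_mul_of_nonneg_left (norm_logMap_add_sub_le hκX hbalX hY') hL)
  have hbump_le : |latticeBump (logUnitBasis K) (logMap X)| ≤ 1 := by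
    rw [abs_of_nonneg (latticeBump_nonneg _ _)]
    exact latticeBump_le_one _ _
  calc |unitWeight s (X + Y) - unitWeight s X|
      ≤ (3 * (L * (n * (4 * ‖Y‖ / (κ * ‖X‖)))) + 4 * (n * (2 * ‖Y‖ / (κ * ‖X‖)))) /
          mixedEmbedding.norm X :=
        abs_mul_rpow_neg_sub_le hX hb hs hbump_le (abs_log_norm_add_sub_le hκX hbalX hY') hδ hbump
    _ ≤ (3 * (L * (n * (4 * ‖Y‖ / (κ * ‖X‖)))) + 4 * (n * (2 * ‖Y‖ / (κ * ‖X‖)))) /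
          (κ * ‖X‖) ^ finrank ℚ K := by
        gcongr
        exact pow_le_norm hκX.le hbalX
    _ = (12 * L + 8) * n / κ / κ ^ finrank ℚ K * ‖Y‖ / ‖X‖ ^ (finrank ℚ K + 1) := by
        rw [mul_pow, pow_succ]
        field_simp
        ring

open Classical in
lemma exists_abs_unitWeight_add_sub_le : ∃ κ C : ℝ, 0 < κ ∧ 0 ≤ C ∧
    ∀ s ∈ Set.Icc (1 : ℝ) 2, ∀ X Y : mixedSpace K, 1 ≤ mixedEmbedding.norm X →
      1 ≤ mixedEmbedding.norm (X + Y) → ‖Y‖ ≤ κ * ‖X‖ →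
      |unitWeight s (X + Y) - unitWeight s X| ≤ C * ‖Y‖ / ‖X‖ ^ (finrank ℚ K + 1) := by
  obtain ⟨κ, C, hκ, hC, H⟩ := exists_abs_unitWeight_add_sub_le_of_ne_zero K
  set m := finrank ℚ K + 1
  refine ⟨min (κ / 2) (1 / 2), C * 2 ^ m, by positivity, by positivity,
    fun s hs X Y hX hXY hY => ?_⟩
  have hX₀ : 0 < ‖X‖ := norm_pos_iff.mpr fun h => by simp [h] at hX; linarith
  have hYκ : ‖Y‖ ≤ κ / 2 * ‖X‖ := hY.trans (by gcongr; exact min_le_left _ _)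
  have hYhalf : ‖Y‖ ≤ 1 / 2 * ‖X‖ := hY.trans (by gcongr; exact min_le_right _ _)
  by_cases hWX : unitWeight s X = 0
  · by_cases hWXY : unitWeight s (X + Y) = 0
    · rw [hWX, hWXY, sub_zero, abs_zero]
      positivity
    have hhalf : ‖X‖ / 2 ≤ ‖X + Y‖ := by linarith [norm_sub_le_norm_add X Y]
    have h := H s hs (X + Y) (-Y) hXY hWXY (by rw [norm_neg]; nlinarith)
    rw [add_neg_cancel_right, norm_neg, abs_sub_comm] at h
    calc |unitWeight s (X + Y) - unitWeight s X| ≤ C * ‖Y‖ / ‖X + Y‖ ^ m := h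
      _ ≤ C * ‖Y‖ / (‖X‖ / 2) ^ m := by gcongr
      _ = C * 2 ^ m * ‖Y‖ / ‖X‖ ^ m := by rw [div_pow]; field_simp
  · calc |unitWeight s (X + Y) - unitWeight s X| ≤ C * ‖Y‖ / ‖X‖ ^ m :=
          H s hs X Y hX hWX (by nlinarith)
      _ ≤ C * 2 ^ m * ‖Y‖ / ‖X‖ ^ m := by
          gcongr
          exact le_mul_of_one_le_right hC (one_le_pow₀ one_le_two)

end UnitWeight

section Integers

open NumberField NumberField.mixedEmbedding

variable {K : Type*} [Field K] [NumberField K]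

lemma norm_mixedEmbedding_eq_absNorm (x : 𝓞 K) :
    mixedEmbedding.norm (mixedEmbedding K x) = Ideal.absNorm (Ideal.span {x}) := by
  rw [norm_eq_norm, Ideal.absNorm_span_singleton, ← Algebra.coe_norm_int, Nat.cast_natAbs]
  push_cast
  rfl

lemma one_le_absNorm {I : Ideal (𝓞 K)} (hI : I ≠ ⊥) : 1 ≤ Ideal.absNorm I :=
  Nat.one_le_iff_ne_zero.mpr (Ideal.absNorm_eq_zero_iff.not.mpr hI)

lemma one_le_norm_mixedEmbedding {x : 𝓞 K} (hx : x ≠ 0) :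
    1 ≤ mixedEmbedding.norm (mixedEmbedding K x) := by
  rw [norm_mixedEmbedding_eq_absNorm]
  exact mod_cast one_le_absNorm (by simpa using hx)

open Classical in
lemma unitWeight_zero {s : ℝ} (hs : s ≠ 0) : unitWeight s (0 : mixedSpace K) = 0 := by
  simp [unitWeight, Real.zero_rpow (neg_ne_zero.mpr hs)]

open Classical in
lemma unitWeight_mixedEmbedding_le_one {s : ℝ} (hs : 0 < s) (x : 𝓞 K) :
    unitWeight s (mixedEmbedding K x) ≤ 1 := by
  rcases eq_or_ne x 0 with rfl | hx
  · simp [unitWeight_zero hs.ne']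
  · exact unitWeight_le_one hs.le (one_le_norm_mixedEmbedding hx)

lemma mixedEmbedding_coe_injective : Function.Injective fun x : 𝓞 K => mixedEmbedding K x :=
  (mixedEmbedding_injective K).comp RingOfIntegers.coe_injective

variable (K)

open Classical in
lemma summable_norm_mixedEmbedding_pow_inv :
    Summable fun x : 𝓞 K => (‖mixedEmbedding K x‖ ^ (finrank ℚ K + 1))⁻¹ := by
  have hrank : finrank ℤ (mixedEmbedding.integerLattice K) = finrank ℚ K := by
    rw [ZLattice.rank ℝ, mixedEmbedding.finrank]
  have h := ZLattice.summable_norm_pow_inv (mixedEmbedding.integerLattice K) (finrank ℚ K + 1)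
    (by lia)
  let f (x : 𝓞 K) : mixedEmbedding.integerLattice K := ⟨mixedEmbedding K x, ⟨x, rfl⟩⟩
  have hf : f.Injective := fun x y hxy =>
    mixedEmbedding_coe_injective (Subtype.ext_iff.mp hxy)
  simpa [Function.comp_def, f] using h.comp_injective hf

open Classical in
lemma tendsto_norm_mixedEmbedding_cofinite :
    Tendsto (fun x : 𝓞 K => ‖mixedEmbedding K x‖) cofinite atTop := by
  refine tendsto_atTop.mpr fun T => ?_
  have hT : 0 < (max T 1 ^ (finrank ℚ K + 1))⁻¹ := by positivity
  filter_upwards [(summable_norm_mixedEmbedding_pow_inv K).tendsto_cofinite_zero.eventually_lt_const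
    hT, (Set.finite_singleton (0 : 𝓞 K)).compl_mem_cofinite] with x hx hx₀
  have hpos : 0 < ‖mixedEmbedding K x‖ :=
    norm_pos_iff.mpr fun h => hx₀ (mixedEmbedding_coe_injective (by simpa using h))
  rw [inv_lt_inv₀ (by positivity) (by positivity)] at hx
  exact (le_max_left T 1).trans (lt_of_pow_lt_pow_left₀ _ hpos.le hx).le

variable {K}

open Classical in
lemma exists_summable_abs_unitWeight_add_sub_le (r : 𝓞 K) :
    ∃ w : 𝓞 K → ℝ, Summable w ∧ ∀ s ∈ Set.Icc (1 : ℝ) 2, ∀ x : 𝓞 K,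
      |unitWeight s (mixedEmbedding K (x + r : 𝓞 K)) - unitWeight s (mixedEmbedding K x)| ≤
        w x := by
  obtain ⟨κ, C, hκ, -, H⟩ := exists_abs_unitWeight_add_sub_le K
  set R := ‖mixedEmbedding K r‖ with hR
  set T := max (R / κ) R + 1
  have hT₀ : 0 < T := by positivity
  let w (x : 𝓞 K) : ℝ := if T ≤ ‖mixedEmbedding K x‖ then
    C * R * (‖mixedEmbedding K x‖ ^ (finrank ℚ K + 1))⁻¹ else 1
  refine ⟨w, ?_, fun s hs x => ?_⟩
  · refine ((summable_norm_mixedEmbedding_pow_inv K).mul_left (C * R)).congr_cofinite ?_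
    filter_upwards [(tendsto_norm_mixedEmbedding_cofinite K).eventually_ge_atTop T] with x hx
    exact (if_pos hx).symm
  · have hadd : mixedEmbedding K (x + r : 𝓞 K) = mixedEmbedding K x + mixedEmbedding K r := by
      rw [← map_add]; rfl
    simp only [w]
    split_ifs with hx
    · have hxR : R / κ ≤ ‖mixedEmbedding K x‖ := by linarith [le_max_left (R / κ) R]
      have hRx : R < ‖mixedEmbedding K x‖ := by linarith [le_max_right (R / κ) R]
      have hx₀ : x ≠ 0 := by
        rintro rfl
        simp at hx
        linarith
      have hxr₀ : x + r ≠ 0 := fun h => by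
        rw [eq_neg_of_add_eq_zero_left h] at hRx
        simp [hR] at hRx
      have hXY := one_le_norm_mixedEmbedding hxr₀
      rw [hadd] at hXY ⊢
      rw [← div_eq_mul_inv]
      exact H s hs _ _ (one_le_norm_mixedEmbedding hx₀) hXY ((div_le_iff₀' hκ).mp hxR)
    · have hs₀ : 0 < s := by linarith [hs.1]
      exact abs_sub_le_of_nonneg_of_le (unitWeight_nonneg _ _)
        (unitWeight_mixedEmbedding_le_one hs₀ _) (unitWeight_nonneg _ _)
        (unitWeight_mixedEmbedding_le_one hs₀ _)

end Integers

section DedekindZeta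

open NumberField Ideal

variable (K : Type*) [Field K] [NumberField K]

/-- The Dedekind zeta function of `K` at a real argument, as a sum over ideals. The zero ideal
contributes `0 ^ (-s) = 0`. -/
noncomputable def idealZeta (s : ℝ) : ℝ :=
  ∑' I : Ideal (𝓞 K), (absNorm I : ℝ) ^ (-s)

lemma hasSum_absNorm_rpow_fiber (s : ℝ) (n : ℕ) :
    HasSum (fun I : {I : Ideal (𝓞 K) // absNorm I = n} => (absNorm I.1 : ℝ) ^ (-s))
      (Nat.card {I : Ideal (𝓞 K) // absNorm I = n} * (n : ℝ) ^ (-s)) := by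
  have : Finite {I : Ideal (𝓞 K) // absNorm I = n} := finite_setOfPred_absNorm_eq n
  have := Fintype.ofFinite {I : Ideal (𝓞 K) // absNorm I = n}
  convert hasSum_fintype _ using 1
  rw [Finset.sum_congr rfl fun I _ => by rw [I.2], Finset.sum_const, nsmul_eq_mul,
    Nat.card_eq_fintype_card, Finset.card_univ]

lemma lseriesTerm_card_absNorm {s : ℝ} (hs : s ≠ 0) (n : ℕ) :
    LSeries.term (fun n => Nat.card {I : Ideal (𝓞 K) // absNorm I = n}) s n =
      (Nat.card {I : Ideal (𝓞 K) // absNorm I = n} * (n : ℝ) ^ (-s) : ℝ) := by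
  rcases eq_or_ne n 0 with rfl | hn
  · simp [Real.zero_rpow (neg_ne_zero.mpr hs)]
  · rw [LSeries.term_of_ne_zero hn, Complex.ofReal_mul, Real.rpow_neg (by positivity),
      Complex.ofReal_inv, Complex.ofReal_cpow (by positivity), div_eq_mul_inv]
    simp

/-- Divergent series have sum zero, so the nonzero residue at `1` forces convergence near `1`. -/
lemma lseriesSummable_card_absNorm {s : ℝ} (hs : 1 < s) :
    LSeriesSummable (fun n => Nat.card {I : Ideal (𝓞 K) // absNorm I = n}) s := by
  have hres : (dedekindZeta_residue K : ℂ) ≠ 0 :=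
    Complex.ofReal_ne_zero.mpr (dedekindZeta_residue_ne_zero K)
  obtain ⟨t, ht, ht₁⟩ := (((tendsto_sub_one_mul_dedekindZeta_nhdsGT K).eventually_ne hres).and
    (Ioo_mem_nhdsGT hs)).exists
  refine LSeriesSummable.of_re_le_re (s := t) (by simpa using ht₁.2.le) ?_
  by_contra h
  exact ht (by rw [dedekindZeta, LSeries, tsum_eq_zero_of_not_summable h, mul_zero])

lemma summable_card_absNorm_mul_rpow {s : ℝ} (hs : 1 < s) :
    Summable fun n : ℕ => Nat.card {I : Ideal (𝓞 K) // absNorm I = n} * (n : ℝ) ^ (-s) := by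
  have h := lseriesSummable_card_absNorm K hs
  rwa [LSeriesSummable, funext (lseriesTerm_card_absNorm K (by linarith)),
    Complex.summable_ofReal] at h

lemma summable_absNorm_rpow {s : ℝ} (hs : 1 < s) :
    Summable fun I : Ideal (𝓞 K) => (absNorm I : ℝ) ^ (-s) := by
  rw [← (Equiv.sigmaFiberEquiv fun I : Ideal (𝓞 K) => absNorm I).summable_iff,
    summable_sigma_of_nonneg fun I => by rw [Function.comp_apply]; positivity]
  refine ⟨fun n => (hasSum_absNorm_rpow_fiber K s n).summable, ?_⟩
  exact (summable_card_absNorm_mul_rpow K hs).congr fun n =>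
    (hasSum_absNorm_rpow_fiber K s n).tsum_eq.symm

lemma dedekindZeta_eq_idealZeta {s : ℝ} (hs : 1 < s) : dedekindZeta K s = idealZeta K s := by
  have h : HasSum (fun n : ℕ => Nat.card {I : Ideal (𝓞 K) // absNorm I = n} * (n : ℝ) ^ (-s))
      (idealZeta K s) :=
    ((Equiv.sigmaFiberEquiv fun I : Ideal (𝓞 K) => absNorm I).hasSum_iff.mpr
      (summable_absNorm_rpow K hs).hasSum).sigma (hasSum_absNorm_rpow_fiber K s)
  rw [← h.tsum_eq, Complex.ofReal_tsum, dedekindZeta, LSeries]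
  exact tsum_congr (lseriesTerm_card_absNorm K (by linarith))

lemma tendsto_sub_one_mul_idealZeta :
    Tendsto (fun s : ℝ => (s - 1) * idealZeta K s) (𝓝[>] 1) (𝓝 (dedekindZeta_residue K)) := by
  have h := (Complex.continuous_re.tendsto _).comp (tendsto_sub_one_mul_dedekindZeta_nhdsGT K)
  rw [Complex.ofReal_re] at h
  refine h.congr' ?_
  filter_upwards [self_mem_nhdsWithin] with s hs
  rw [Function.comp_apply, dedekindZeta_eq_idealZeta K hs]
  norm_cast

end DedekindZeta

section PartialZeta

open NumberField NumberField.Units NumberField.Units.dirichletUnitTheorem Ideal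
open NumberField.mixedEmbedding NumberField.mixedEmbedding.fundamentalCone

variable {K : Type*} [Field K] [NumberField K]

open Classical in
lemma unitWeight_mul_unit (s : ℝ) {g : 𝓞 K} (hg : g ≠ 0) (u : (𝓞 K)ˣ) :
    unitWeight s (mixedEmbedding K (g * u : 𝓞 K)) =
      latticeBump (logUnitBasis K) (logEmbedding K (Additive.ofMul u) +
        logMap (mixedEmbedding K g)) * (absNorm (span {g}) : ℝ) ^ (-s) := by
  have hmul : mixedEmbedding K (g * u : 𝓞 K) = u • mixedEmbedding K g := by
    rw [mul_comm, unitSMul_smul, ← map_mul]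
    rfl
  have hne : mixedEmbedding.norm (mixedEmbedding K g) ≠ 0 := by
    linarith [one_le_norm_mixedEmbedding hg]
  rw [unitWeight, hmul, logMap_unit_smul u hne, norm_unit_smul, norm_mixedEmbedding_eq_absNorm]

open Classical in
lemma hasSum_unitWeight_span_eq {s : ℝ} (hs : s ≠ 0) (I : Ideal (𝓞 K)) :
    HasSum (fun x : {x : 𝓞 K // span {x} = I} => unitWeight s (mixedEmbedding K x.1))
      (if I.IsPrincipal then torsionOrder K * (absNorm I : ℝ) ^ (-s) else 0) := by
  split_ifs with h
  · obtain ⟨g, rfl : I = span {g}⟩ := h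
    rcases eq_or_ne g 0 with rfl | hg
    · convert hasSum_zero with x
      · rw [span_singleton_eq_bot.mp (x.2.trans (span_singleton_eq_bot.mpr rfl))]
        simp [unitWeight_zero hs]
      · simp [Real.zero_rpow (neg_ne_zero.mpr hs)]
    let e (u : (𝓞 K)ˣ) : {x : 𝓞 K // span {x} = span {g}} :=
      ⟨g * u, span_singleton_mul_right_unit u.isUnit g⟩
    have he : Function.Bijective e :=
      ⟨fun u v huv => Units.ext (mul_left_cancel₀ hg (congrArg Subtype.val huv)), fun ⟨y, hy⟩ =>
        have ⟨u, hu⟩ := (span_singleton_eq_span_singleton.mp hy).symm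
        ⟨u, Subtype.ext hu⟩⟩
    rw [← (Equiv.ofBijective e he).hasSum_iff]
    exact ((hasSum_latticeBump_logEmbedding_add K (logMap (mixedEmbedding K g))).mul_right
      ((absNorm (span {g}) : ℝ) ^ (-s))).congr_fun fun u => unitWeight_mul_unit s hg u
  · have : IsEmpty {x : 𝓞 K // span {x} = I} := ⟨fun x => h ⟨x.1, x.2.symm⟩⟩
    exact hasSum_empty

open Classical in
lemma summable_unitWeight {s : ℝ} (hs : 1 < s) :
    Summable fun x : 𝓞 K => unitWeight s (mixedEmbedding K x) := by
  rw [← (Equiv.sigmaFiberEquiv fun x : 𝓞 K => span {x}).summable_iff,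
    summable_sigma_of_nonneg fun x => by exact unitWeight_nonneg s _]
  have hfiber := hasSum_unitWeight_span_eq (K := K) (s := s) (by linarith)
  refine ⟨fun I => (hfiber I).summable, ?_⟩
  refine .of_nonneg_of_le (fun I => tsum_nonneg fun x => unitWeight_nonneg s _) (fun I => ?_)
    ((summable_absNorm_rpow K hs).mul_left (torsionOrder K : ℝ))
  refine (hfiber I).tsum_eq.trans_le ?_
  split_ifs
  · exact le_rfl
  · positivity

open Classical in
/-- The Dedekind zeta function of `K` restricted to the ideals in the inverse class of `A`. -/
noncomputable def partialZeta (A : Ideal (𝓞 K)) (s : ℝ) : ℝ :=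
  ∑' J : Ideal (𝓞 K), if (A * J).IsPrincipal then (absNorm J : ℝ) ^ (-s) else 0

open Classical in
lemma summable_partialZeta (A : Ideal (𝓞 K)) {s : ℝ} (hs : 1 < s) :
    Summable fun J => if (A * J).IsPrincipal then (absNorm J : ℝ) ^ (-s) else 0 :=
  (summable_absNorm_rpow K hs).of_nonneg_of_le (fun J => by positivity)
    fun J => by split_ifs <;> [exact le_rfl; positivity]

lemma partialZeta_nonneg (A : Ideal (𝓞 K)) (s : ℝ) : 0 ≤ partialZeta A s :=
  tsum_nonneg fun J => by positivity

lemma partialZeta_le_idealZeta (A : Ideal (𝓞 K)) {s : ℝ} (hs : 1 < s) :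
    partialZeta A s ≤ idealZeta K s :=
  (summable_partialZeta A hs).tsum_le_tsum (fun J => by split_ifs <;> [exact le_rfl; positivity])
    (summable_absNorm_rpow K hs)

open Classical in
lemma tsum_unitWeight_ideal {A : Ideal (𝓞 K)} (hA : A ≠ ⊥) {s : ℝ} (hs : 1 < s) :
    ∑' a : A, unitWeight s (mixedEmbedding K (a : 𝓞 K)) =
      torsionOrder K * ((absNorm A : ℝ) ^ (-s) * partialZeta A s) := by
  let e (p : Σ J : Ideal (𝓞 K), {x : 𝓞 K // span {x} = A * J}) : A :=
    ⟨p.2.1, Ideal.mul_le_left (p.2.2.le (mem_span_singleton_self p.2.1))⟩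
  have he : Function.Bijective e := by
    refine ⟨?_, fun ⟨x, hx⟩ => ?_⟩
    · rintro ⟨J, x, hx⟩ ⟨J', x', hx'⟩ h
      obtain rfl : x = x' := congrArg Subtype.val h
      obtain rfl : J = J' := mul_left_cancel₀ hA (hx.symm.trans hx')
      rfl
    · obtain ⟨J, hJ⟩ := dvd_iff_le.mpr ((span_singleton_le_iff_mem A).mpr hx)
      exact ⟨⟨J, x, hJ⟩, rfl⟩
  have hsum : Summable fun a : A => unitWeight s (mixedEmbedding K (a : 𝓞 K)) :=
    (summable_unitWeight hs).comp_injective Subtype.val_injective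
  have h := ((Equiv.ofBijective e he).hasSum_iff.mpr hsum.hasSum).sigma
    fun J => hasSum_unitWeight_span_eq (by linarith) (A * J)
  rw [← h.tsum_eq, partialZeta, ← tsum_mul_left, ← tsum_mul_left]
  refine tsum_congr fun J => ?_
  simp only [mul_ite, mul_zero, map_mul, Nat.cast_mul]
  rw [Real.mul_rpow (by positivity) (by positivity)]

lemma abs_sub_rpow_mul_le {N s z : ℝ} (hN : 1 ≤ N) (hs : 1 ≤ s) (hz : 0 ≤ z) :
    |z - N ^ (1 - s) * z| ≤ Real.log N * ((s - 1) * z) := by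
  have hle : N ^ (1 - s) ≤ 1 := Real.rpow_le_one_of_one_le_of_nonpos hN (by linarith)
  have hge : 1 + (1 - s) * Real.log N ≤ N ^ (1 - s) := by
    rw [Real.rpow_def_of_pos (by linarith)]
    linarith [Real.add_one_le_exp (Real.log N * (1 - s))]
  rw [abs_of_nonneg (by nlinarith)]
  nlinarith

/-- Translating by a coset representative of `A` changes `unitWeight s` by a summable amount,
uniformly in `s`, so the sums over the cosets of `A` differ by a bounded quantity. -/
lemma exists_abs_absNorm_rpow_mul_partialZeta_sub_le {A : Ideal (𝓞 K)} (hA : A ≠ ⊥) :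
    ∃ C : ℝ, ∀ s ∈ Set.Ioc (1 : ℝ) 2,
      |(absNorm A : ℝ) ^ (1 - s) * partialZeta A s - partialZeta (⊤ : Ideal (𝓞 K)) s| ≤ C := by
  have hindex : (Submodule.toAddSubgroup A).index = absNorm A := rfl
  have : (Submodule.toAddSubgroup A).FiniteIndex := ⟨hindex ▸ absNorm_eq_zero_iff.not.mpr hA⟩
  obtain ⟨C, hC⟩ := exists_abs_index_mul_tsum_sub_tsum_le (Submodule.toAddSubgroup A)
    (g := fun s x => unitWeight s (mixedEmbedding K (x : 𝓞 K)))
    exists_summable_abs_unitWeight_add_sub_le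
  refine ⟨C, fun s hs => ?_⟩
  have hw : (1 : ℝ) ≤ torsionOrder K := mod_cast torsionOrder_pos K
  have hN : (0 : ℝ) < absNorm A := mod_cast one_le_absNorm hA
  have hsumA : ∑' a : A.toAddSubgroup, unitWeight s (mixedEmbedding K (a : 𝓞 K)) =
      torsionOrder K * ((absNorm A : ℝ) ^ (-s) * partialZeta A s) := tsum_unitWeight_ideal hA hs.1
  have hsum : ∑' x : 𝓞 K, unitWeight s (mixedEmbedding K x) =
      torsionOrder K * partialZeta (⊤ : Ideal (𝓞 K)) s := by
    have h := tsum_unitWeight_ideal (K := K) top_ne_bot hs.1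
    rw [absNorm_top, Nat.cast_one, Real.one_rpow, one_mul] at h
    rw [← h]
    exact ((Equiv.Set.univ (𝓞 K)).tsum_eq _).symm
  have h := hC s ⟨hs.1.le, hs.2⟩ (summable_unitWeight hs.1)
  have hfactor : (absNorm A : ℝ) * (torsionOrder K * ((absNorm A : ℝ) ^ (-s) * partialZeta A s)) -
      torsionOrder K * partialZeta (⊤ : Ideal (𝓞 K)) s = torsionOrder K *
        ((absNorm A : ℝ) ^ (1 - s) * partialZeta A s - partialZeta (⊤ : Ideal (𝓞 K)) s) := by
    rw [sub_eq_add_neg 1 s, Real.rpow_add hN, Real.rpow_one]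
    ring
  rw [hsumA, hsum, hindex, hfactor, abs_mul, abs_of_nonneg (by positivity)] at h
  exact (le_mul_of_one_le_left (abs_nonneg _) hw).trans h

lemma partialZeta_sub_isBigO_one {A : Ideal (𝓞 K)} (hA : A ≠ ⊥) :
    (fun s => partialZeta A s - partialZeta (⊤ : Ideal (𝓞 K)) s) =O[𝓝[>] 1] fun _ => (1 : ℝ) := by
  obtain ⟨C, hC⟩ := exists_abs_absNorm_rpow_mul_partialZeta_sub_le hA
  set ρ := dedekindZeta_residue K + 1
  have hN : (1 : ℝ) ≤ absNorm A := mod_cast one_le_absNorm hA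
  refine .of_bound (Real.log (absNorm A) * ρ + C) ?_
  filter_upwards [(tendsto_sub_one_mul_idealZeta K).eventually_le_const (lt_add_one _),
    Ioc_mem_nhdsGT (one_lt_two (α := ℝ))] with s hζ hs
  rw [norm_one, mul_one, Real.norm_eq_abs]
  have hnear : |partialZeta A s - (absNorm A : ℝ) ^ (1 - s) * partialZeta A s| ≤
      Real.log (absNorm A) * ρ :=
    (abs_sub_rpow_mul_le hN hs.1.le (partialZeta_nonneg A s)).trans <|
      mul_le_mul_of_nonneg_left ((mul_le_mul_of_nonneg_left (partialZeta_le_idealZeta A hs.1)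
        (by linarith [hs.1])).trans hζ) (Real.log_nonneg hN)
  exact (abs_sub_le _ _ _).trans (add_le_add hnear (hC s hs))

end PartialZeta

section IdealCharacter

open NumberField Ideal
open scoped nonZeroDivisors

lemma exists_classGroup_monoidHom {R M : Type*} [CommRing R] [IsDedekindDomain R] [Monoid M]
    (Φ : Ideal R →* M) (hΦ : ∀ x : R, x ≠ 0 → Φ (span {x}) = 1) :
    ∃ φ : ClassGroup R →* M, ∀ I : (Ideal R)⁰, φ (ClassGroup.mk0 I) = Φ I := by
  have hcongr (I J : (Ideal R)⁰) (h : ClassGroup.mk0 I = ClassGroup.mk0 J) : Φ I = Φ J := by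
    obtain ⟨x, y, hx, hy, hxy⟩ := ClassGroup.mk0_eq_mk0_iff.mp h
    simpa [hΦ x hx, hΦ y hy] using congrArg Φ hxy
  choose A hA using ClassGroup.mk0_surjective (R := R)
  have hmk (I : (Ideal R)⁰) : Φ (A (ClassGroup.mk0 I)) = Φ I := hcongr _ _ (hA _)
  refine ⟨⟨⟨fun c => Φ (A c), ?_⟩, fun c d => ?_⟩, hmk⟩
  · rw [← map_one ClassGroup.mk0, hmk, Submonoid.coe_one, map_one]
  · rw [← map_mul, ← Submonoid.coe_mul]
    exact hcongr _ _ (by simp only [map_mul, hA])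

variable {K : Type*} [Field K] [NumberField K]

/-- The Dirichlet series `∑ Φ(I) N(I)⁻ˢ` of a multiplicative function `Φ` on the ideals of
`𝓞 K`. -/
noncomputable def dirichletSeries (Φ : Ideal (𝓞 K) →*₀ ℝ) (s : ℝ) : ℝ :=
  ∑' I : Ideal (𝓞 K), Φ I * (absNorm I : ℝ) ^ (-s)

lemma ideal_mul_isPrincipal_iff {R : Type*} [CommRing R] [IsDedekindDomain R]
    {I J : (Ideal R)⁰} :
    ((I : Ideal R) * J).IsPrincipal ↔ ClassGroup.mk0 I = (ClassGroup.mk0 J)⁻¹ := by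
  rw [eq_inv_iff_mul_eq_one, ← map_mul, ClassGroup.mk0_eq_one_iff (SetLike.coe_mem _)]
  rfl

/-- By orthogonality the Dirichlet series of a nontrivial class group character is a combination
of the differences of partial zeta functions. -/
lemma dirichletSeries_isBigO_one {Φ : Ideal (𝓞 K) →*₀ ℝ}
    (hprincipal : ∀ x : 𝓞 K, x ≠ 0 → Φ (span {x}) = 1) (hne : ∃ I ≠ ⊥, Φ I ≠ 1) :
    dirichletSeries Φ =O[𝓝[>] 1] fun _ => (1 : ℝ) := by
  classical
  obtain ⟨φ, hφ⟩ := exists_classGroup_monoidHom Φ.toMonoidHom hprincipal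
  have hφ_ne : φ ≠ 1 := by
    rintro rfl
    obtain ⟨I, hI, hI1⟩ := hne
    exact hI1 (hφ ⟨I, mem_nonZeroDivisors_of_ne_zero hI⟩).symm
  choose A hA using fun c : ClassGroup (𝓞 K) => ClassGroup.mk0_surjective c⁻¹
  have hA_ne (c) : (A c : Ideal (𝓞 K)) ≠ ⊥ := nonZeroDivisors.coe_ne_zero (A c)
  have hterm {s : ℝ} (hs : 1 < s) (J : Ideal (𝓞 K)) : Φ J * (absNorm J : ℝ) ^ (-s) =
      ∑ c, φ c * if ((A c : Ideal (𝓞 K)) * J).IsPrincipal then (absNorm J : ℝ) ^ (-s) else 0 := by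
    obtain rfl | hJ := eq_or_ne J ⊥
    · simp [Real.zero_rpow (by linarith : -s ≠ 0)]
    · lift J to (Ideal (𝓞 K))⁰ using mem_nonZeroDivisors_of_ne_zero hJ
      simp only [ideal_mul_isPrincipal_iff, hA, inv_inj, mul_ite, mul_zero, Finset.sum_ite_eq',
        Finset.mem_univ, if_true, hφ]
      rfl
  have hsum : (fun s => ∑ c, φ c * (partialZeta (A c : Ideal (𝓞 K)) s -
      partialZeta (⊤ : Ideal (𝓞 K)) s))
      =O[𝓝[>] 1] fun _ => (1 : ℝ) := by
    simpa only [Finset.sum_fn] using IsBigO.sum fun c (_ : c ∈ Finset.univ) =>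
      (partialZeta_sub_isBigO_one (hA_ne c)).const_mul_left (φ c)
  refine hsum.congr' ?_ .rfl
  filter_upwards [self_mem_nhdsWithin] with s hs
  rw [dirichletSeries, tsum_congr (hterm hs), Summable.tsum_finsetSum fun c _ =>
    (summable_partialZeta _ hs).mul_left _]
  simp_rw [mul_sub, Finset.sum_sub_distrib, ← Finset.sum_mul, sum_hom_units_eq_zero φ hφ_ne,
    zero_mul, sub_zero, tsum_mul_left, partialZeta]

end IdealCharacter

section EulerProduct

open IsDedekindDomain

variable {R : Type*} [CommRing R] [IsDedekindDomain R]

lemma asIdeal_dvd_iff {v w : HeightOneSpectrum R} : v.asIdeal ∣ w.asIdeal ↔ v = w := by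
  refine ⟨fun h => ?_, fun h => h ▸ dvd_rfl⟩
  exact HeightOneSpectrum.ext (w.isMaximal.eq_of_le v.isPrime.ne_top (Ideal.dvd_iff_le.mp h)).symm

open Classical in
lemma tsum_mul_prod_one_sub_eq {t : Ideal R →*₀ ℝ} (ht : Summable t)
    (S : Finset (HeightOneSpectrum R)) :
    (∑' I, t I) * ∏ v ∈ S, (1 - t v.asIdeal) =
      ∑' I, if ∀ v ∈ S, ¬ v.asIdeal ∣ I then t I else 0 := by
  induction S using Finset.induction_on with
  | empty => simp
  | insert v S hv ih =>
    have hsummable (p : Ideal R → Prop) [DecidablePred p] :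
        Summable fun I => if p I then t I else 0 :=
      .of_norm_bounded ht.norm fun I => by split_ifs <;> simp
    have hmultiples : (∑' I, if (∀ w ∈ S, ¬ w.asIdeal ∣ I) ∧ v.asIdeal ∣ I then t I else 0) =
        t v.asIdeal * ∑' I, if ∀ w ∈ S, ¬ w.asIdeal ∣ I then t I else 0 := by
      rw [← tsum_mul_left, ← (mul_right_injective₀ v.ne_bot).tsum_eq]
      · refine tsum_congr fun J => ?_
        have hcoprime : (∀ w ∈ S, ¬ w.asIdeal ∣ v.asIdeal * J) ↔ ∀ w ∈ S, ¬ w.asIdeal ∣ J :=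
          forall₂_congr fun w hw => not_congr <| by
            rw [w.prime.dvd_mul, asIdeal_dvd_iff, or_iff_right (by rintro rfl; exact hv hw)]
        simp only [hcoprime, dvd_mul_right, and_true, map_mul, mul_ite, mul_zero]
      · intro I hI
        obtain ⟨J, rfl⟩ : v.asIdeal ∣ I := by
          by_contra h
          exact hI (if_neg fun hI' => h hI'.2)
        exact ⟨J, rfl⟩
    rw [Finset.prod_insert hv, mul_left_comm, ih, sub_mul, one_mul, ← hmultiples,
      ← Summable.tsum_sub (hsummable _) (hsummable _)]
    refine tsum_congr fun I => ?_
    by_cases h₁ : v.asIdeal ∣ I <;> by_cases h₂ : ∀ w ∈ S, ¬ w.asIdeal ∣ I <;>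
      simp [h₁, h₂]

lemma exists_asIdeal_dvd {I : Ideal R} (h₀ : I ≠ ⊥) (h₁ : I ≠ ⊤) :
    ∃ v : HeightOneSpectrum R, v.asIdeal ∣ I := by
  obtain ⟨m, hm, hle⟩ := Ideal.exists_le_maximal I h₁
  exact ⟨⟨m, hm.isPrime, ne_bot_of_le_ne_bot h₀ hle⟩, Ideal.dvd_iff_le.mpr hle⟩

lemma tendsto_tsum_mul_prod_one_sub {t : Ideal R →*₀ ℝ} (ht : Summable t) :
    Tendsto (fun S : Finset (HeightOneSpectrum R) => (∑' I, t I) * ∏ v ∈ S, (1 - t v.asIdeal))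
      atTop (𝓝 1) := by
  classical
  simp_rw [tsum_mul_prod_one_sub_eq ht]
  rw [← tsum_ite_eq (⊤ : Ideal R) fun _ => (1 : ℝ)]
  refine tendsto_tsum_of_dominated_convergence ht.norm (fun I => ?_)
    (.of_forall fun S I => by split_ifs <;> simp)
  obtain rfl | h₀ := eq_or_ne I ⊥
  · rw [if_neg bot_ne_top]
    simp only [← Ideal.zero_eq_bot, map_zero, ite_self, tendsto_const_nhds]
  obtain rfl | h₁ := eq_or_ne I ⊤
  · refine tendsto_const_nhds.congr fun S => ?_
    rw [if_pos rfl, if_pos fun v _ h => v.isPrime.ne_top (top_le_iff.mp (Ideal.dvd_iff_le.mp h)),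
      ← Ideal.one_eq_top, map_one]
  · obtain ⟨v, hv⟩ := exists_asIdeal_dvd h₀ h₁
    refine tendsto_const_nhds.congr' ?_
    filter_upwards [eventually_ge_atTop {v}] with S hS
    rw [if_neg h₁, if_neg fun h => h v (hS (Finset.mem_singleton_self v)) hv]

lemma abs_add_log_one_sub_le {x : ℝ} (hx : |x| ≤ 1 / 2) : |x + Real.log (1 - x)| ≤ 2 * x ^ 2 := by
  have h := Real.abs_log_sub_add_sum_range_le (hx.trans_lt one_half_lt_one) 1
  simp only [Finset.sum_range_one, zero_add, pow_one, Nat.cast_zero, div_one] at h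
  refine h.trans ((div_le_iff₀ (by linarith)).mpr ?_)
  rw [one_add_one_eq_two, sq_abs]
  nlinarith [sq_nonneg x]

lemma abs_log_tsum_sub_tsum_prime_le {t : Ideal R →*₀ ℝ} (ht : Summable t)
    (ht_half : ∀ v : HeightOneSpectrum R, |t v.asIdeal| ≤ 1 / 2) :
    0 < ∑' I, t I ∧ |Real.log (∑' I, t I) - ∑' v : HeightOneSpectrum R, t v.asIdeal| ≤
      2 * ∑' v : HeightOneSpectrum R, t v.asIdeal ^ 2 := by
  have hprime : Summable fun v : HeightOneSpectrum R => t v.asIdeal :=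
    ht.comp_injective fun _ _ h => HeightOneSpectrum.ext h
  have hsq : Summable fun v : HeightOneSpectrum R => 2 * t v.asIdeal ^ 2 :=
    (hprime.abs.of_nonneg_of_le (fun _ => sq_nonneg _) fun v => by
      rw [← sq_abs]; nlinarith [abs_nonneg (t v.asIdeal), ht_half v]).mul_left 2
  have herr : Summable fun v : HeightOneSpectrum R =>
      t v.asIdeal + Real.log (1 - t v.asIdeal) :=
    .of_norm_bounded hsq fun v => abs_add_log_one_sub_le (ht_half v)
  have hlog : Summable fun v : HeightOneSpectrum R => Real.log (1 - t v.asIdeal) := by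
    simpa using herr.sub hprime
  have hprod : Tendsto (fun S : Finset (HeightOneSpectrum R) => ∏ v ∈ S, (1 - t v.asIdeal)) atTop
      (𝓝 (Real.exp (∑' v : HeightOneSpectrum R, Real.log (1 - t v.asIdeal)))) := by
    refine hlog.hasSum.rexp.congr fun S => Finset.prod_congr rfl fun v _ => Real.exp_log ?_
    linarith [(abs_le.mp (ht_half v)).2]
  have hL : (∑' I, t I) * Real.exp (∑' v : HeightOneSpectrum R, Real.log (1 - t v.asIdeal)) = 1 :=
    tendsto_nhds_unique (hprod.const_mul _) (tendsto_tsum_mul_prod_one_sub ht)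
  rw [eq_inv_of_mul_eq_one_left hL, ← Real.exp_neg, Real.log_exp, ← abs_neg, neg_sub,
    sub_neg_eq_add, ← hprime.tsum_add hlog, ← tsum_mul_left]
  refine ⟨Real.exp_pos _, ?_⟩
  exact tsum_of_norm_bounded (f := fun v => t v.asIdeal + Real.log (1 - t v.asIdeal))
    hsq.hasSum fun v => abs_add_log_one_sub_le (ht_half v)

end EulerProduct

section PrimeSeries

open NumberField IsDedekindDomain Ideal

variable {K : Type*} [Field K] [NumberField K]

lemma two_le_absNorm (v : HeightOneSpectrum (𝓞 K)) : 2 ≤ absNorm v.asIdeal := by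
  have h₁ : absNorm v.asIdeal ≠ 1 := absNorm_eq_one_iff.not.mpr v.isPrime.ne_top
  have := one_le_absNorm v.ne_bot
  lia

/-- The Dirichlet series `∑ χ(v) N(v)⁻ˢ` over the maximal ideals of `𝓞 K`. -/
noncomputable def primeSeries (χ : HeightOneSpectrum (𝓞 K) → ℝ) (s : ℝ) : ℝ :=
  ∑' v : HeightOneSpectrum (𝓞 K), χ v * (absNorm v.asIdeal : ℝ) ^ (-s)

variable (K) in
lemma summable_absNorm_asIdeal_rpow {s : ℝ} (hs : 1 < s) :
    Summable fun v : HeightOneSpectrum (𝓞 K) => (absNorm v.asIdeal : ℝ) ^ (-s) :=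
  (summable_absNorm_rpow K hs).comp_injective fun _ _ h => HeightOneSpectrum.ext h

/-- The multiplicative function `I ↦ Φ(I) N(I)⁻ˢ`. -/
noncomputable def normTwist (Φ : Ideal (𝓞 K) →*₀ ℝ) (s : ℝ) : Ideal (𝓞 K) →*₀ ℝ where
  toFun I := Φ I * (absNorm I : ℝ) ^ (-s)
  map_zero' := by rw [map_zero, zero_mul]
  map_one' := by rw [map_one, map_one, Nat.cast_one, Real.one_rpow, one_mul]
  map_mul' I J := by
    rw [map_mul, map_mul, Nat.cast_mul, Real.mul_rpow (by positivity) (by positivity)]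
    ring

lemma abs_normTwist_le {Φ : Ideal (𝓞 K) →*₀ ℝ} (hΦ : ∀ I, |Φ I| ≤ 1) (s : ℝ) (I : Ideal (𝓞 K)) :
    |normTwist Φ s I| ≤ (absNorm I : ℝ) ^ (-s) := by
  change |Φ I * _| ≤ _
  rw [abs_mul, abs_of_nonneg (Real.rpow_nonneg (Nat.cast_nonneg _) _)]
  exact mul_le_of_le_one_left (by positivity) (hΦ I)

lemma abs_log_dirichletSeries_sub_primeSeries_le {Φ : Ideal (𝓞 K) →*₀ ℝ} (hΦ : ∀ I, |Φ I| ≤ 1)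
    {s : ℝ} (hs : 1 < s) :
    0 < dirichletSeries Φ s ∧
      |Real.log (dirichletSeries Φ s) - primeSeries (fun v => Φ v.asIdeal) s| ≤
        2 * ∑' v : HeightOneSpectrum (𝓞 K), (absNorm v.asIdeal : ℝ) ^ (-2 : ℝ) := by
  have hle (v : HeightOneSpectrum (𝓞 K)) :
      |normTwist Φ s v.asIdeal| ≤ (absNorm v.asIdeal : ℝ)⁻¹ := by
    refine (abs_normTwist_le hΦ s _).trans ?_
    rw [← Real.rpow_neg_one]
    exact Real.rpow_le_rpow_of_exponent_le (mod_cast one_le_absNorm v.ne_bot) (by linarith)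
  have hhalf (v : HeightOneSpectrum (𝓞 K)) : |normTwist Φ s v.asIdeal| ≤ 1 / 2 := by
    rw [one_div]
    exact (hle v).trans (inv_anti₀ two_pos (mod_cast two_le_absNorm v))
  have hsq (v : HeightOneSpectrum (𝓞 K)) :
      normTwist Φ s v.asIdeal ^ 2 ≤ (absNorm v.asIdeal : ℝ) ^ (-2 : ℝ) := by
    rw [← sq_abs, Real.rpow_neg (by positivity), Real.rpow_two, ← inv_pow]
    exact pow_le_pow_left₀ (abs_nonneg _) (hle v) 2
  have hsummable := summable_absNorm_asIdeal_rpow K one_lt_two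
  obtain ⟨hpos, hlog⟩ := abs_log_tsum_sub_tsum_prime_le
    (.of_norm_bounded (summable_absNorm_rpow K hs) (abs_normTwist_le hΦ s)) hhalf
  refine ⟨hpos, hlog.trans (mul_le_mul_of_nonneg_left ?_ zero_le_two)⟩
  exact (hsummable.of_nonneg_of_le (fun _ => sq_nonneg _) hsq).tsum_le_tsum hsq hsummable

lemma log_dirichletSeries_sub_primeSeries_isBigO_one {Φ : Ideal (𝓞 K) →*₀ ℝ}
    (hΦ : ∀ I, |Φ I| ≤ 1) :
    (fun s => Real.log (dirichletSeries Φ s) - primeSeries (fun v => Φ v.asIdeal) s)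
      =O[𝓝[>] 1] fun _ => (1 : ℝ) := by
  refine .of_bound (2 * ∑' v : HeightOneSpectrum (𝓞 K), (absNorm v.asIdeal : ℝ) ^ (-2 : ℝ)) ?_
  filter_upwards [self_mem_nhdsWithin] with s hs
  rw [norm_one, mul_one]
  exact (abs_log_dirichletSeries_sub_primeSeries_le hΦ hs).2

open Classical in
lemma dirichletSeries_one {s : ℝ} (hs : s ≠ 0) :
    dirichletSeries (1 : Ideal (𝓞 K) →*₀ ℝ) s = idealZeta K s :=
  tsum_congr fun I => by
    obtain rfl | hI := eq_or_ne I ⊥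
    · simp [Real.zero_rpow (neg_ne_zero.mpr hs)]
    · rw [MonoidWithZeroHom.one_apply_of_ne_zero hI, one_mul]

variable (K) in
lemma primeSeries_one_add_log_isBigO_one :
    (fun s => primeSeries (fun _ : HeightOneSpectrum (𝓞 K) => 1) s + Real.log (s - 1))
      =O[𝓝[>] 1] fun _ => (1 : ℝ) := by
  classical
  have hzeta : Tendsto (fun s => Real.log ((s - 1) * idealZeta K s)) (𝓝[>] 1)
      (𝓝 (Real.log (dedekindZeta_residue K))) :=
    (tendsto_sub_one_mul_idealZeta K).log (dedekindZeta_residue_pos K).ne'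
  have hone (I : Ideal (𝓞 K)) : |(1 : Ideal (𝓞 K) →*₀ ℝ) I| ≤ 1 := by
    rw [MonoidWithZeroHom.one_apply_def]
    split_ifs <;> simp
  refine ((hzeta.isBigO_one ℝ).sub (log_dirichletSeries_sub_primeSeries_isBigO_one hone)).congr' ?_
    .rfl
  filter_upwards [self_mem_nhdsWithin] with s hs
  have hs' : s ≠ 0 := by linarith [Set.mem_Ioi.mp hs]
  have hpos := (abs_log_dirichletSeries_sub_primeSeries_le hone hs).1
  rw [dirichletSeries_one hs'] at hpos ⊢
  rw [Real.log_mul (sub_pos.mpr hs).ne' hpos.ne']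
  have hΦ (v : HeightOneSpectrum (𝓞 K)) : (1 : Ideal (𝓞 K) →*₀ ℝ) v.asIdeal = 1 :=
    MonoidWithZeroHom.one_apply_of_ne_zero v.ne_bot
  simp only [hΦ]
  ring

variable (K) in
lemma tendsto_primeSeries_one_atTop :
    Tendsto (primeSeries fun _ : HeightOneSpectrum (𝓞 K) => 1) (𝓝[>] 1) atTop := by
  have hlog : Tendsto (fun s : ℝ => -Real.log (s - 1)) (𝓝[>] 1) atTop := by
    refine tendsto_neg_atBot_atTop.comp (Real.tendsto_log_nhdsGT_zero.comp ?_)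
    refine tendsto_nhdsWithin_iff.mpr ⟨?_, by
      filter_upwards [self_mem_nhdsWithin] with s hs using sub_pos.mpr (Set.mem_Ioi.mp hs)⟩
    exact tendsto_nhdsWithin_of_tendsto_nhds (by
      simpa using (continuous_sub_right (1 : ℝ)).tendsto 1)
  obtain ⟨C, hC⟩ := (primeSeries_one_add_log_isBigO_one K).bound
  have hbelow : ∀ᶠ s in 𝓝[>] 1,
      -C ≤ primeSeries (fun _ : HeightOneSpectrum (𝓞 K) => 1) s + Real.log (s - 1) := by
    filter_upwards [hC] with s hs
    rw [norm_one, mul_one] at hs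
    exact (abs_le.mp hs).1
  simpa using tendsto_atTop_add_left_of_le' _ _ hbelow hlog

end PrimeSeries

section DegreeOnePrimes

open NumberField IsDedekindDomain Ideal

lemma isBigO_one_of_hasSum_of_abs_le {ι : Type*} {f : ℝ → ι → ℝ} {F : ℝ → ℝ} {b : ι → ℝ}
    (hF : ∀ s > 1, HasSum (f s) (F s)) (hfb : ∀ s > 1, ∀ i, |f s i| ≤ b i) (hb : Summable b) :
    F =O[𝓝[>] 1] fun _ => (1 : ℝ) := by
  refine .of_bound (∑' i, b i) ?_
  filter_upwards [self_mem_nhdsWithin] with s hs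
  rw [norm_one, mul_one, ← (hF s hs).tsum_eq]
  exact tsum_of_norm_bounded hb.hasSum (hfb s hs)

lemma hasSum_primeSeries {K : Type*} [Field K] [NumberField K] {χ : HeightOneSpectrum (𝓞 K) → ℝ}
    {C : ℝ} (hχ : ∀ v, |χ v| ≤ C) {s : ℝ} (hs : 1 < s) :
    HasSum (fun v => χ v * (absNorm v.asIdeal : ℝ) ^ (-s)) (primeSeries χ s) :=
  (Summable.of_norm_bounded ((summable_absNorm_asIdeal_rpow K hs).mul_left C) fun v => by
    rw [Real.norm_eq_abs, abs_mul, abs_of_nonneg (Real.rpow_nonneg (Nat.cast_nonneg _) _)]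
    gcongr
    exact hχ v).hasSum

lemma absNorm_rpow_neg_le_one {K : Type*} [Field K] [NumberField K] (v : HeightOneSpectrum (𝓞 K))
    {s : ℝ} (hs : 0 ≤ s) : (absNorm v.asIdeal : ℝ) ^ (-s) ≤ 1 :=
  Real.rpow_le_one_of_one_le_of_nonpos (mod_cast one_le_absNorm v.ne_bot) (neg_nonpos.mpr hs)

lemma primeSeries_sub_isBigO_one_of_finite_ne {K : Type*} [Field K] [NumberField K]
    {χ ψ : HeightOneSpectrum (𝓞 K) → ℝ} {C D : ℝ} (hχ : ∀ v, |χ v| ≤ C) (hψ : ∀ v, |ψ v| ≤ D)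
    (hfin : {v | χ v ≠ ψ v}.Finite) :
    (fun s => primeSeries χ s - primeSeries ψ s) =O[𝓝[>] 1] fun _ => (1 : ℝ) := by
  refine isBigO_one_of_hasSum_of_abs_le (b := fun v => |χ v - ψ v|)
    (fun s hs => (hasSum_primeSeries hχ hs).sub (hasSum_primeSeries hψ hs)) (fun s hs v => ?_)
    (summable_of_hasFiniteSupport (hfin.subset fun v hv h => hv (by simp [h])))
  rw [← sub_mul, abs_mul, abs_of_nonneg (a := _ ^ _) (by positivity)]
  exact mul_le_of_le_one_right (abs_nonneg _) (absNorm_rpow_neg_le_one v (by linarith))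

variable (M N : Type*) [Field M] [NumberField M] [Field N] [NumberField N] [Algebra M N]

/-- The partition of the maximal ideals of `𝓞 N` according to the maximal ideal of `𝓞 M` they lie
over. -/
noncomputable def sigmaPrimesOverEquiv :
    (Σ v : HeightOneSpectrum (𝓞 M), v.asIdeal.primesOver (𝓞 N)) ≃ HeightOneSpectrum (𝓞 N) where
  toFun P := ⟨P.2, P.2.2.1, ne_bot_of_mem_primesOver P.1.ne_bot P.2.2⟩
  invFun w := ⟨w.under (𝓞 M), w.asIdeal, w.isPrime, ⟨rfl⟩⟩
  left_inv := by
    rintro ⟨v, P, hP, hover⟩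
    refine Sigma.subtype_ext (HeightOneSpectrum.ext hover.over.symm) rfl
  right_inv _ := rfl

variable {M}

instance finite_primesOver (v : HeightOneSpectrum (𝓞 M)) : Finite (v.asIdeal.primesOver (𝓞 N)) :=
  Algebra.QuasiFinite.finite_primesOver v.asIdeal

/-- The number of primes of `𝓞 N` over `v` with residue degree one. -/
noncomputable def degreeOneCount (v : HeightOneSpectrum (𝓞 M)) : ℕ :=
  Nat.card {P : v.asIdeal.primesOver (𝓞 N) // P.1.inertiaDeg (𝓞 M) = 1}

lemma card_primesOver_le_finrank (v : HeightOneSpectrum (𝓞 M)) :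
    Nat.card (v.asIdeal.primesOver (𝓞 N)) ≤ finrank M N := by
  have := Fintype.ofFinite (v.asIdeal.primesOver (𝓞 N))
  rw [IsFractionRing.finrank_eq (𝓞 M) M (𝓞 N) N,
    ← sum_ramification_inertia_eq_finrank v.asIdeal, Nat.card_eq_fintype_card,
    Fintype.card_eq_sum_ones]
  refine Finset.sum_le_sum fun P _ => ?_
  have := P.2.1
  exact Nat.mul_pos (P.1.ramificationIdx_pos (𝓞 M)) (P.1.inertiaDeg_pos (𝓞 M))

lemma degreeOneCount_le_finrank (v : HeightOneSpectrum (𝓞 M)) :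
    degreeOneCount N v ≤ finrank M N :=
  (Finite.card_subtype_le _).trans (card_primesOver_le_finrank N v)

lemma abs_absNorm_rpow_sub_le {v : HeightOneSpectrum (𝓞 M)} (P : v.asIdeal.primesOver (𝓞 N))
    {s : ℝ} (hs : 1 ≤ s) :
    |(absNorm P.1 : ℝ) ^ (-s) -
        if P.1.inertiaDeg (𝓞 M) = 1 then (absNorm v.asIdeal : ℝ) ^ (-s) else 0| ≤
      (absNorm v.asIdeal : ℝ) ^ (-2 : ℝ) := by
  obtain ⟨hP, hover⟩ := P.2
  rw [← absNorm_pow_inertiaDeg v.asIdeal P.1]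
  split_ifs with hdeg
  · rw [hdeg, pow_one, sub_self, abs_zero]
    positivity
  have hdeg : 2 ≤ P.1.inertiaDeg (𝓞 M) := by
    have := P.1.inertiaDeg_pos (𝓞 M)
    lia
  rw [sub_zero, abs_of_nonneg (by positivity), Nat.cast_pow, ← Real.rpow_natCast,
    ← Real.rpow_mul (Nat.cast_nonneg _)]
  refine Real.rpow_le_rpow_of_exponent_le (mod_cast one_le_absNorm v.ne_bot) ?_
  have : (2 : ℝ) ≤ P.1.inertiaDeg (𝓞 M) := mod_cast hdeg
  nlinarith

lemma abs_tsum_primesOver_sub_degreeOneCount_le (v : HeightOneSpectrum (𝓞 M)) {s : ℝ}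
    (hs : 1 ≤ s) :
    |∑' P : v.asIdeal.primesOver (𝓞 N), (absNorm P.1 : ℝ) ^ (-s) -
        degreeOneCount N v * (absNorm v.asIdeal : ℝ) ^ (-s)| ≤
      finrank M N * (absNorm v.asIdeal : ℝ) ^ (-2 : ℝ) := by
  have := Fintype.ofFinite (v.asIdeal.primesOver (𝓞 N))
  have hcount : degreeOneCount N v * (absNorm v.asIdeal : ℝ) ^ (-s) =
      ∑ P : v.asIdeal.primesOver (𝓞 N),
        if P.1.inertiaDeg (𝓞 M) = 1 then (absNorm v.asIdeal : ℝ) ^ (-s) else 0 := by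
    rw [← Finset.sum_filter, Finset.sum_const, nsmul_eq_mul, ← Fintype.card_subtype,
      ← Nat.card_eq_fintype_card, degreeOneCount]
  rw [tsum_fintype, hcount, ← Finset.sum_sub_distrib]
  refine (Finset.abs_sum_le_sum_abs _ _).trans
    ((Finset.sum_le_card_nsmul _ _ _ fun P _ => abs_absNorm_rpow_sub_le N P hs).trans ?_)
  rw [nsmul_eq_mul, Finset.card_univ, ← Nat.card_eq_fintype_card]
  gcongr
  exact card_primesOver_le_finrank N v

variable (M) in
lemma hasSum_tsum_primesOver {s : ℝ} (hs : 1 < s) :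
    HasSum (fun v : HeightOneSpectrum (𝓞 M) =>
        ∑' P : v.asIdeal.primesOver (𝓞 N), (absNorm P.1 : ℝ) ^ (-s))
      (primeSeries (fun _ : HeightOneSpectrum (𝓞 N) => 1) s) := by
  have hsum : HasSum (fun w : HeightOneSpectrum (𝓞 N) => (absNorm w.asIdeal : ℝ) ^ (-s))
      (primeSeries (fun _ : HeightOneSpectrum (𝓞 N) => 1) s) := by
    simpa only [one_mul] using
      hasSum_primeSeries (K := N) (χ := fun _ => 1) (fun _ => abs_one.le) hs
  exact ((sigmaPrimesOverEquiv M N).hasSum_iff.mpr hsum).sigma fun v =>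
    (Summable.of_finite (f := fun P : v.asIdeal.primesOver (𝓞 N) => _)).hasSum

variable (M) in
lemma primeSeries_one_sub_primeSeries_degreeOneCount_isBigO_one :
    (fun s => primeSeries (fun _ : HeightOneSpectrum (𝓞 N) => 1) s -
      primeSeries (fun v : HeightOneSpectrum (𝓞 M) => (degreeOneCount N v : ℝ)) s)
      =O[𝓝[>] 1] fun _ => (1 : ℝ) := by
  refine isBigO_one_of_hasSum_of_abs_le
    (fun s hs => (hasSum_tsum_primesOver M N hs).sub
      (hasSum_primeSeries (C := finrank M N) (fun v => ?_) hs))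
    (fun s hs v => abs_tsum_primesOver_sub_degreeOneCount_le N v hs.le)
    ((summable_absNorm_asIdeal_rpow M one_lt_two).mul_left _)
  rw [Nat.abs_cast]
  exact mod_cast degreeOneCount_le_finrank N v

end DegreeOnePrimes

section QuadraticExtension

open NumberField IsDedekindDomain Ideal
open scoped Pointwise

variable {M N : Type*} [Field M] [NumberField M] [Field N] [NumberField N] [Algebra M N]
  {d : 𝓞 M} {θ : 𝓞 N} {v : HeightOneSpectrum (𝓞 M)}

lemma isSquare_mk_of_inertiaDeg_eq_one (hθ : θ ^ 2 = algebraMap (𝓞 M) (𝓞 N) d)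
    (P : v.asIdeal.primesOver (𝓞 N)) (hdeg : P.1.inertiaDeg (𝓞 M) = 1) :
    IsSquare (Ideal.Quotient.mk v.asIdeal d) := by
  obtain ⟨hP, hover⟩ := P.2
  have := v.isMaximal
  have := IsMaximal.of_liesOver_isMaximal P.1 v.asIdeal
  rw [inertiaDeg_eq_of_isMaximal v.asIdeal P.1] at hdeg
  let := Ideal.Quotient.field v.asIdeal
  obtain ⟨r, hr⟩ := (Algebra.finrank_eq_one_iff_bijective_algebraMap.mp hdeg).2
    (Ideal.Quotient.mk P.1 θ)
  refine ⟨r, FaithfulSMul.algebraMap_injective (𝓞 M ⧸ v.asIdeal) (𝓞 N ⧸ P.1) ?_⟩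
  rw [map_mul, hr, ← map_mul, ← sq, hθ]
  rfl

lemma exists_smul_eq_neg [IsGalois M N] (hθ : θ ^ 2 = algebraMap (𝓞 M) (𝓞 N) d)
    (hd : ¬ IsSquare (d : M)) : ∃ σ : Gal(N/M), σ • θ = -θ := by
  obtain ⟨σ, hσ⟩ : ∃ σ : Gal(N/M), σ (θ : N) ≠ θ := by
    by_contra! hfixed
    obtain ⟨y, hy⟩ := IntermediateField.mem_bot.mp ((IsGalois.mem_bot_iff_fixed (θ : N)).mpr hfixed)
    refine hd ⟨y, (algebraMap M N).injective ?_⟩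
    rw [map_mul, hy, ← sq]
    exact congr_arg (algebraMap (𝓞 N) N) hθ.symm
  have hsq : (σ • θ) ^ 2 = θ ^ 2 := by rw [← smul_pow', hθ, smul_algebraMap]
  refine ⟨σ, (sq_eq_sq_iff_eq_or_eq_neg.mp hsq).resolve_left fun h => hσ ?_⟩
  exact congr_arg (algebraMap (𝓞 N) N) h

lemma one_lt_card_primesOver [IsGalois M N] (hθ : θ ^ 2 = algebraMap (𝓞 M) (𝓞 N) d)
    (hd : ¬ IsSquare (d : M)) (hv : 2 * d ∉ v.asIdeal)
    (hsq : IsSquare (Ideal.Quotient.mk v.asIdeal d)) :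
    1 < Nat.card (v.asIdeal.primesOver (𝓞 N)) := by
  obtain ⟨σ, hσ⟩ := exists_smul_eq_neg hθ hd
  obtain ⟨r, hr⟩ : ∃ r, r ^ 2 - d ∈ v.asIdeal := by
    obtain ⟨r, hr⟩ := hsq
    obtain ⟨r, rfl⟩ := Ideal.Quotient.mk_surjective r
    exact ⟨r, by rw [← Ideal.Quotient.eq, map_pow, sq, hr]⟩
  obtain ⟨P⟩ : Nonempty (v.asIdeal.primesOver (𝓞 N)) := inferInstance
  obtain ⟨hP, hover⟩ := P.2
  rw [Finite.one_lt_card_iff_nontrivial, ← not_subsingleton_iff_nontrivial]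
  intro hsub
  have hPσ : σ • P.1 = P.1 := congr_arg Subtype.val
    (Subsingleton.elim (⟨σ • P.1, inferInstance, inferInstance⟩ : v.asIdeal.primesOver (𝓞 N)) P)
  have hmem {x : 𝓞 N} (hx : x ∈ P.1) : σ • x ∈ P.1 :=
    hPσ ▸ Ideal.smul_mem_pointwise_smul σ x P.1 hx
  have hprod : (θ - algebraMap _ _ r) * (θ + algebraMap _ _ r) ∈ P.1 := by
    have := P.1.neg_mem ((mem_of_liesOver P.1 v.asIdeal _).mp hr)
    rwa [map_sub, ← hθ, map_pow, neg_sub, sq_sub_sq, mul_comm] at this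
  have h2θ : 2 * θ ∈ P.1 := by
    obtain h | h := hP.mem_or_mem hprod
    · have := P.1.sub_mem h (hmem h)
      rw [smul_sub, smul_algebraMap, hσ] at this
      convert this using 1
      ring
    · have := P.1.sub_mem h (hmem h)
      rw [smul_add, smul_algebraMap, hσ] at this
      convert this using 1
      ring
  refine hv ((mem_of_liesOver P.1 v.asIdeal _).mpr ?_)
  rw [map_mul, ← hθ, sq, ← mul_assoc, map_ofNat]
  exact P.1.mul_mem_right θ h2θ

/-- The quadratic residue symbol of `d` modulo `v`, with the value `1` if `v` divides `d`. -/
noncomputable def residueSymbol (d : 𝓞 M) (v : HeightOneSpectrum (𝓞 M)) : ℝ :=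
  open Classical in if IsSquare (Ideal.Quotient.mk v.asIdeal d) then 1 else -1

omit [NumberField M] in
lemma abs_residueSymbol (d : 𝓞 M) (v : HeightOneSpectrum (𝓞 M)) : |residueSymbol d v| = 1 := by
  rw [residueSymbol]
  split_ifs <;> simp

lemma degreeOneCount_eq_one_add_residueSymbol [Algebra.IsQuadraticExtension M N]
    (hθ : θ ^ 2 = algebraMap (𝓞 M) (𝓞 N) d) (hd : ¬ IsSquare (d : M))
    (hv : 2 * d ∉ v.asIdeal) : (degreeOneCount N v : ℝ) = 1 + residueSymbol d v := by
  rw [residueSymbol]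
  split_ifs with hsq
  · have := Fintype.ofFinite (v.asIdeal.primesOver (𝓞 N))
    have hpos (P : v.asIdeal.primesOver (𝓞 N)) :
        1 ≤ P.1.ramificationIdx (𝓞 M) * P.1.inertiaDeg (𝓞 M) :=
      have := P.2.1
      Nat.mul_pos (P.1.ramificationIdx_pos (𝓞 M)) (P.1.inertiaDeg_pos (𝓞 M))
    have hsum := sum_ramification_inertia_eq_finrank (S := 𝓞 N) v.asIdeal
    rw [← IsFractionRing.finrank_eq (𝓞 M) M (𝓞 N) N, Algebra.IsQuadraticExtension.finrank_eq_two]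
      at hsum
    have hcard : Nat.card (v.asIdeal.primesOver (𝓞 N)) = 2 :=
      le_antisymm ((card_primesOver_le_finrank N v).trans_eq
        (Algebra.IsQuadraticExtension.finrank_eq_two M N)) (one_lt_card_primesOver hθ hd hv hsq)
    have hdeg (P : v.asIdeal.primesOver (𝓞 N)) : P.1.inertiaDeg (𝓞 M) = 1 := by
      refine Nat.eq_one_of_mul_eq_one_left (m := P.1.ramificationIdx (𝓞 M)) ?_
      refine ((Finset.sum_eq_sum_iff_of_le fun P _ => hpos P).mp ?_ P (Finset.mem_univ P)).symm
      rw [hsum, ← Fintype.card_eq_sum_ones, ← Nat.card_eq_fintype_card, hcard]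
    rw [degreeOneCount, Nat.card_congr (Equiv.subtypeUnivEquiv hdeg), hcard]
    norm_num
  · have : IsEmpty {P : v.asIdeal.primesOver (𝓞 N) // P.1.inertiaDeg (𝓞 M) = 1} :=
      ⟨fun P => hsq (isSquare_mk_of_inertiaDeg_eq_one hθ P.1 P.2)⟩
    rw [degreeOneCount, Nat.card_of_isEmpty, Nat.cast_zero, add_neg_cancel]

end QuadraticExtension

section QuadraticField

open NumberField QuadraticAlgebra

variable {K : Type*} [Field K] {d : K}

lemma fact_forall_sq_ne_of_not_isSquare (hd : ¬ IsSquare d) : Fact (∀ r : K, r ^ 2 ≠ d + 0 * r) :=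
  ⟨fun r hr => hd ⟨r, by rw [← sq, hr, zero_mul, add_zero]⟩⟩

lemma omega_sq : (ω : QuadraticAlgebra K d 0) ^ 2 = algebraMap K _ d := by
  rw [sq, omega_mul_omega_eq_mk]
  rfl

lemma algebraNorm_eq_norm (z : QuadraticAlgebra K d 0) : Algebra.norm K z = norm z :=
  det_toLinearMap_eq_norm z

lemma norm_eq_sq_sub_mul_sq (z : QuadraticAlgebra K d 0) : norm z = z.re ^ 2 - d * z.im ^ 2 := by
  rw [norm_def]
  ring

instance : Algebra.IsQuadraticExtension K (QuadraticAlgebra K d 0) where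
  finrank_eq_two' := QuadraticAlgebra.finrank_eq_two d 0

instance [NumberField K] [Fact (∀ r : K, r ^ 2 ≠ d + 0 * r)] :
    NumberField (QuadraticAlgebra K d 0) :=
  .of_module_finite K _

lemma isIntegral_omega (d : 𝓞 K) : IsIntegral ℤ (ω : QuadraticAlgebra K d 0) :=
  .of_pow two_pos (omega_sq (d := (d : K)) ▸ (RingOfIntegers.isIntegral_coe d).algebraMap)

lemma isSquare_or_isSquare_mul_of_isSquare_algebraMap [NeZero (2 : K)] {k : K}
    (hk : IsSquare (algebraMap K (QuadraticAlgebra K d 0) k)) : IsSquare k ∨ IsSquare (d * k) := by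
  obtain ⟨z, hz⟩ := hk
  have hre : k = z.re * z.re + d * z.im * z.im := by simpa using congr_arg re hz
  have him : z.re * z.im + z.im * z.re = 0 := by simpa using (congr_arg im hz).symm
  rw [mul_comm z.im, ← two_mul, mul_eq_zero_iff_left two_ne_zero, mul_eq_zero] at him
  obtain h | h := him
  · exact .inr ⟨d * z.im, by rw [hre, h]; ring⟩
  · exact .inl ⟨z.re, by rw [hre, h]; ring⟩

end QuadraticField

section ResidueSymbol

open NumberField IsDedekindDomain Ideal QuadraticAlgebra

variable {K : Type*} [Field K] [NumberField K]

lemma finite_setOf_mem_asIdeal {d : 𝓞 K} (hd : d ≠ 0) :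
    {v : HeightOneSpectrum (𝓞 K) | d ∈ v.asIdeal}.Finite := by
  refine (Ideal.finite_factors (I := span {d}) (by simpa using hd)).subset fun v hv => ?_
  exact (dvd_span_singleton).mpr hv

lemma primeSeries_degreeOneCount_sub_isBigO_one {N : Type*} [Field N] [NumberField N] [Algebra K N]
    [Algebra.IsQuadraticExtension K N] {d : 𝓞 K} (hd : ¬ IsSquare (d : K)) {θ : 𝓞 N}
    (hθ : θ ^ 2 = algebraMap (𝓞 K) (𝓞 N) d) :
    (fun s => primeSeries (fun v : HeightOneSpectrum (𝓞 K) => (degreeOneCount N v : ℝ)) s -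
      primeSeries (fun v => 1 + residueSymbol d v) s) =O[𝓝[>] 1] fun _ => (1 : ℝ) := by
  have hd₀ : 2 * d ≠ 0 := mul_ne_zero two_ne_zero (by rintro rfl; simp at hd)
  refine primeSeries_sub_isBigO_one_of_finite_ne (C := finrank K N) (D := 1 + 1)
    (fun v => ?_) (fun v => ?_) ((finite_setOf_mem_asIdeal hd₀).subset fun v hv => ?_)
  · rw [Nat.abs_cast]
    exact mod_cast degreeOneCount_le_finrank N v
  · exact (abs_add_le _ _).trans_eq (by rw [abs_one, abs_residueSymbol])
  · by_contra h
    exact hv (degreeOneCount_eq_one_add_residueSymbol hθ hd h)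

lemma primeSeries_residueSymbol_isBigO_one {d : 𝓞 K} (hd : ¬ IsSquare (d : K)) :
    primeSeries (residueSymbol d) =O[𝓝[>] 1] fun _ => (1 : ℝ) := by
  have := fact_forall_sq_ne_of_not_isSquare hd
  have hcount := primeSeries_degreeOneCount_sub_isBigO_one (N := QuadraticAlgebra K (d : K) 0) hd
    (θ := ⟨ω, isIntegral_omega d⟩) (RingOfIntegers.ext omega_sq)
  refine (((primeSeries_one_add_log_isBigO_one (QuadraticAlgebra K (d : K) 0)).sub
    (primeSeries_one_add_log_isBigO_one K)).sub
    ((primeSeries_one_sub_primeSeries_degreeOneCount_isBigO_one K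
      (QuadraticAlgebra K (d : K) 0)).add hcount)).congr' ?_ .rfl
  filter_upwards [self_mem_nhdsWithin] with s hs
  have hadd : primeSeries (fun v => 1 + residueSymbol d v) s =
      primeSeries (fun _ : HeightOneSpectrum (𝓞 K) => 1) s + primeSeries (residueSymbol d) s := by
    refine HasSum.unique (hasSum_primeSeries (C := 1 + 1) (fun v => ?_) hs) ?_
    · exact (abs_add_le _ _).trans_eq (by rw [abs_one, abs_residueSymbol])
    · simpa only [add_mul] using (hasSum_primeSeries (fun _ => abs_one.le) hs).add
        (hasSum_primeSeries (fun v => (abs_residueSymbol d v).le) hs)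
  rw [hadd]
  ring

end ResidueSymbol

section NegativePrincipalIdeal

open NumberField IsDedekindDomain Ideal

variable {K : Type*} [Field K] [NumberField K] {Φ : Ideal (𝓞 K) →*₀ ℝ} {a b : 𝓞 K}

lemma two_mul_primeSeries_sub_primeSeries_one_isBigO_one (hΦ : ∀ I, |Φ I| ≤ 1)
    (ha : ¬ IsSquare (a : K)) (hb : ¬ IsSquare (b : K)) (hab : ¬ IsSquare ((a * b : 𝓞 K) : K))
    (hprime : {v : HeightOneSpectrum (𝓞 K) | Φ v.asIdeal ≠
      (1 + residueSymbol a v + residueSymbol b v - residueSymbol (a * b) v) / 2}.Finite) :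
    (fun s => 2 * primeSeries (fun v => Φ v.asIdeal) s -
      primeSeries (fun _ : HeightOneSpectrum (𝓞 K) => 1) s) =O[𝓝[>] 1] fun _ => (1 : ℝ) := by
  let ψ (v : HeightOneSpectrum (𝓞 K)) : ℝ :=
    (1 + residueSymbol a v + residueSymbol b v - residueSymbol (a * b) v) / 2
  have hψ (v : HeightOneSpectrum (𝓞 K)) : |ψ v| ≤ 2 := by
    have h₁ := abs_le.mp (abs_residueSymbol a v).le
    have h₂ := abs_le.mp (abs_residueSymbol b v).le
    have h₃ := abs_le.mp (abs_residueSymbol (a * b) v).le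
    rw [abs_le]
    constructor <;> simp only [ψ] <;> linarith
  refine (((primeSeries_sub_isBigO_one_of_finite_ne
      (fun v => hΦ v.asIdeal) hψ hprime).const_mul_left 2).add
    (((primeSeries_residueSymbol_isBigO_one ha).add (primeSeries_residueSymbol_isBigO_one hb)).sub
      (primeSeries_residueSymbol_isBigO_one hab))).congr' ?_ .rfl
  filter_upwards [self_mem_nhdsWithin] with s hs
  have hsum (d : 𝓞 K) := hasSum_primeSeries (fun v => (abs_residueSymbol d v).le) hs
  have hone := hasSum_primeSeries (K := K) (χ := fun _ => 1) (fun _ => abs_one.le) hs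
  have hψsum := (((hone.add (hsum a)).add (hsum b)).sub (hsum (a * b))).div_const 2
  have := hψsum.unique ((hasSum_primeSeries hψ hs).congr_fun fun v => by simp only [ψ]; ring)
  linarith

lemma eventually_primeSeries_le_of_dirichletSeries_isBigO_one (hΦ : ∀ I, |Φ I| ≤ 1)
    (hbounded : dirichletSeries Φ =O[𝓝[>] 1] fun _ => (1 : ℝ)) :
    ∃ C, ∀ᶠ s in 𝓝[>] 1, primeSeries (fun v => Φ v.asIdeal) s ≤ C := by
  obtain ⟨C, hC⟩ := hbounded.bound
  obtain ⟨D, hD⟩ := (log_dirichletSeries_sub_primeSeries_isBigO_one hΦ).bound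
  refine ⟨Real.log C + D, ?_⟩
  filter_upwards [hC, hD, self_mem_nhdsWithin] with s hsC hsD hs
  rw [norm_one, mul_one] at hsC hsD
  have hpos := (abs_log_dirichletSeries_sub_primeSeries_le hΦ hs).1
  have hlog := Real.log_le_log hpos ((le_abs_self _).trans hsC)
  linarith [(abs_le.mp hsD).1]

/-- By `hprime` the mean value of `Φ` over the primes is `1/2`. Were `Φ` trivial on principal
ideals, its mean value would be `1` or at most `0`. -/
lemma exists_map_span_singleton_eq_neg_one (hΦ : ∀ I ≠ ⊥, Φ I = 1 ∨ Φ I = -1)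
    (ha : ¬ IsSquare (a : K)) (hb : ¬ IsSquare (b : K)) (hab : ¬ IsSquare ((a * b : 𝓞 K) : K))
    (hprime : {v : HeightOneSpectrum (𝓞 K) | Φ v.asIdeal ≠
      (1 + residueSymbol a v + residueSymbol b v - residueSymbol (a * b) v) / 2}.Finite) :
    ∃ x ≠ 0, Φ (span {x}) = -1 := by
  by_contra! hneg
  have hprincipal (x : 𝓞 K) (hx : x ≠ 0) : Φ (span {x}) = 1 :=
    (hΦ _ (by simpa using hx)).resolve_right (hneg x hx)
  have hle (I : Ideal (𝓞 K)) : |Φ I| ≤ 1 := by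
    obtain rfl | hI := eq_or_ne I ⊥
    · rw [← Ideal.zero_eq_bot, map_zero, abs_zero]
      exact zero_le_one
    · obtain h | h := hΦ I hI <;> simp [h]
  obtain ⟨C, hC⟩ := (two_mul_primeSeries_sub_primeSeries_one_isBigO_one hle ha hb hab hprime).bound
  suffices ∃ B, ∀ᶠ s in 𝓝[>] 1, primeSeries (fun _ : HeightOneSpectrum (𝓞 K) => 1) s ≤ B by
    obtain ⟨B, hB⟩ := this
    obtain ⟨s, hle, hlt⟩ :=
      (hB.and ((tendsto_primeSeries_one_atTop K).eventually_gt_atTop B)).exists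
    exact hle.not_gt hlt
  by_cases htrivial : ∀ I ≠ ⊥, Φ I = 1
  · have hone : (fun v : HeightOneSpectrum (𝓞 K) => Φ v.asIdeal) = fun _ => 1 :=
      funext fun v => htrivial _ v.ne_bot
    refine ⟨C, hC.mono fun s hs => ?_⟩
    rw [norm_one, mul_one, hone] at hs
    linarith [(abs_le.mp hs).2]
  · push Not at htrivial
    obtain ⟨B, hB⟩ := eventually_primeSeries_le_of_dirichletSeries_isBigO_one hle
      (dirichletSeries_isBigO_one hprincipal htrivial)
    refine ⟨2 * B + C, ?_⟩
    filter_upwards [hB, hC] with s hsB hsC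
    rw [norm_one, mul_one] at hsC
    linarith [(abs_le.mp hsC).1]

end NegativePrincipalIdeal

section CompletelyMultiplicative

open IsDedekindDomain UniqueFactorizationMonoid

variable {R M : Type*} [CommRing R] [IsDedekindDomain R] [CommMonoidWithZero M]

lemma idealHom_ext {f g : Ideal R →*₀ M}
    (h : ∀ v : HeightOneSpectrum R, f v.asIdeal = g v.asIdeal) : f = g := by
  ext I
  induction I using induction_on_prime with
  | h₁ => rw [map_zero, map_zero]
  | h₂ I hI => rw [Ideal.isUnit_iff.mp hI, ← Ideal.one_eq_top, map_one, map_one]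
  | h₃ I P _ hP ih => rw [map_mul, map_mul, ih, h ⟨P, Ideal.isPrime_of_prime hP, hP.ne_zero⟩]

open Classical in
/-- The completely multiplicative function on ideals that agrees with `f` on the nonzero primes. -/
noncomputable def completelyMultiplicative (f : Ideal R → M) : Ideal R →*₀ M where
  toFun I := if I = 0 then 0 else ((normalizedFactors I).map f).prod
  map_zero' := if_pos rfl
  map_one' := by
    rw [if_neg one_ne_zero, normalizedFactors_one, Multiset.map_zero, Multiset.prod_zero]
  map_mul' I J := by
    by_cases hI : I = 0
    · simp [hI]
    by_cases hJ : J = 0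
    · simp [hJ]
    rw [if_neg hI, if_neg hJ, if_neg (mul_ne_zero hI hJ), normalizedFactors_mul hI hJ,
      Multiset.map_add, Multiset.prod_add]

lemma completelyMultiplicative_apply (f : Ideal R → M) {I : Ideal R} (hI : I ≠ 0) :
    completelyMultiplicative f I = ((normalizedFactors I).map f).prod :=
  if_neg hI

lemma completelyMultiplicative_asIdeal (f : Ideal R → M) (v : HeightOneSpectrum R) :
    completelyMultiplicative f v.asIdeal = f v.asIdeal := by
  rw [completelyMultiplicative_apply f v.ne_bot, normalizedFactors_irreducible v.irreducible,
    normalize_eq, Multiset.map_singleton, Multiset.prod_singleton]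

end CompletelyMultiplicative

section Reciprocity

variable {k : Type*} [Field k] [Finite k]

lemma isSquare_mul_iff_of_ne_zero {x y : k} (hx : x ≠ 0) (hy : y ≠ 0) :
    IsSquare (x * y) ↔ (IsSquare x ↔ IsSquare y) := by
  classical
  have := Fintype.ofFinite k
  rw [← quadraticChar_one_iff_isSquare hx, ← quadraticChar_one_iff_isSquare hy,
    ← quadraticChar_one_iff_isSquare (mul_ne_zero hx hy), map_mul]
  obtain h | h := quadraticChar_dichotomy hx <;> obtain h' | h' := quadraticChar_dichotomy hy <;>
    simp [h, h']

lemma isSquare_natCast_iff_legendreSym {q : ℕ} [Fact q.Prime] (hq : q % 8 = 1) :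
    IsSquare (q : k) ↔ legendreSym q (Nat.card k) ≠ -1 := by
  have := Fintype.ofFinite k
  have hq₂ : q ≠ 2 := by rintro rfl; norm_num at hq
  rw [Nat.card_eq_fintype_card]
  by_cases hk : ringChar k = 2
  · have : CharP k 2 := ringChar.of_eq hk
    obtain ⟨n, -, hn⟩ := FiniteField.card k 2
    have hsq : IsSquare ((Fintype.card k : ℤ) : ZMod q) := by
      rw [hn]
      push_cast
      exact ((ZMod.exists_sq_eq_two_iff hq₂).mpr (.inl hq)).pow n
    exact iff_of_true (FiniteField.isSquare_of_char_two hk _)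
      fun h => (legendreSym.eq_neg_one_iff q).mp h hsq
  · have hχ : ZMod.χ₄ q = 1 := ZMod.χ₄_nat_one_mod_four (by lia)
    rw [FiniteField.isSquare_odd_prime_iff hk hq₂]
    have hodd : Fintype.card k % 2 = 1 := FiniteField.odd_card_of_char_ne_two hk
    have hχk : ZMod.χ₄ (Fintype.card k) = 1 ∨ ZMod.χ₄ (Fintype.card k) = -1 := by
      rw [ZMod.χ₄_nat_eq_if_mod_four, if_neg (by lia)]
      split_ifs <;> simp
    obtain h | h := hχk
    · rw [h, legendreSym]
      norm_cast
      rw [one_mul]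
    · have : legendreSym q (-Fintype.card k) = legendreSym q (Fintype.card k) := by
        rw [legendreSym.at_neg hq₂, hχ, one_mul]
      rw [h, ← this, legendreSym]
      push_cast
      rw [neg_one_mul]

end Reciprocity

section PairCharacter

open NumberField IsDedekindDomain Ideal

/-- For primes `a, b ≡ 1 mod 8`, the sign telling whether `a` or `b` is a square in the field with
`n` elements, `n` a prime power: by quadratic reciprocity this only depends on `n` modulo `a`
and `b`. -/
def pairSymbol (a b n : ℕ) [Fact a.Prime] [Fact b.Prime] : ℝ :=
  if legendreSym a n = -1 ∧ legendreSym b n = -1 then -1 else 1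

lemma legendreSym_eq_zero_or_one_or_neg_one (q : ℕ) [Fact q.Prime] (n : ℤ) :
    legendreSym q n = 0 ∨ legendreSym q n = 1 ∨ legendreSym q n = -1 := by
  by_cases h : (n : ZMod q) = 0
  · exact .inl ((legendreSym.eq_zero_iff q n).mpr h)
  · exact .inr (legendreSym.eq_one_or_neg_one q h)

variable (a b : ℕ) [Fact a.Prime] [Fact b.Prime]

lemma pairSymbol_eq_one_iff (n : ℕ) :
    pairSymbol a b n = 1 ↔ legendreSym a n ≠ -1 ∨ legendreSym b n ≠ -1 := by
  rw [pairSymbol, ← not_and_or]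
  split_ifs with h <;> norm_num [h]

lemma pairSymbol_eq_one_or_neg_one (n : ℕ) : pairSymbol a b n = 1 ∨ pairSymbol a b n = -1 :=
  (ite_eq_or_eq _ _ _).symm

lemma legendreSym_natCast_pow (n m : ℕ) :
    legendreSym a ((n ^ m : ℕ) : ℤ) = legendreSym a n ^ m := by
  rw [Nat.cast_pow]
  exact map_pow (legendreSym.hom a) _ _

lemma pairSymbol_pow (n m : ℕ) : pairSymbol a b (n ^ m) = pairSymbol a b n ^ m := by
  simp only [pairSymbol, legendreSym_natCast_pow]
  have hpow : ∀ x : ℤ, (x = 0 ∨ x = 1 ∨ x = -1) → (x ^ m = -1 ↔ x = -1 ∧ Odd m) := by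
    rintro x (rfl | rfl | rfl)
    · obtain rfl | hm := eq_or_ne m 0 <;> simp [*]
    · simp
    · obtain hm | hm := m.even_or_odd
      · simp [hm.neg_one_pow, Nat.not_odd_iff_even.mpr hm]
      · simp [hm.neg_one_pow, hm]
  simp only [hpow _ (legendreSym_eq_zero_or_one_or_neg_one a n),
    hpow _ (legendreSym_eq_zero_or_one_or_neg_one b n), ← and_and_right]
  obtain hm | hm := m.even_or_odd
  · rw [if_neg fun h => Nat.not_odd_iff_even.mpr hm h.2]
    split_ifs <;> simp [hm.neg_one_pow]
  · simp only [hm, and_true]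
    split_ifs <;> simp [hm.neg_one_pow]

variable (K : Type*) [Field K] [NumberField K]

/-- The quadratic character of ideals which is `1` at a prime `P` iff `a` or `b` is a square
modulo `P`. -/
noncomputable def pairCharacter : Ideal (𝓞 K) →*₀ ℝ :=
  completelyMultiplicative fun P => pairSymbol a b (absNorm P)

variable {K}

lemma pairCharacter_asIdeal (v : HeightOneSpectrum (𝓞 K)) :
    pairCharacter a b K v.asIdeal = pairSymbol a b (absNorm v.asIdeal) :=
  completelyMultiplicative_asIdeal _ v

lemma pairCharacter_eq_one_or_neg_one {I : Ideal (𝓞 K)} (hI : I ≠ ⊥) :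
    pairCharacter a b K I = 1 ∨ pairCharacter a b K I = -1 := by
  rw [pairCharacter, completelyMultiplicative_apply _ hI]
  refine Multiset.prod_induction (fun x : ℝ => x = 1 ∨ x = -1) _ ?_ (.inl rfl) ?_
  · rintro x y (rfl | rfl) (rfl | rfl) <;> norm_num
  · simp only [Multiset.mem_map]
    rintro _ ⟨P, -, rfl⟩
    exact pairSymbol_eq_one_or_neg_one a b _

lemma pairCharacter_relNorm {N : Type*} [Field N] [NumberField N] [Algebra K N]
    (I : Ideal (𝓞 N)) : pairCharacter a b K (relNorm (𝓞 K) I) = pairCharacter a b N I := by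
  suffices h : (pairCharacter a b K).comp (relNorm (𝓞 K)) = pairCharacter a b N from
    DFunLike.congr_fun h I
  refine idealHom_ext fun w => ?_
  have hw := w.ne_bot
  let v : HeightOneSpectrum (𝓞 K) := ⟨w.asIdeal.under (𝓞 K), inferInstance, mt
    (Ideal.eq_bot_of_comap_eq_bot (R := 𝓞 K) (I := w.asIdeal)) hw⟩
  have : w.asIdeal.LiesOver v.asIdeal := ⟨rfl⟩
  have := v.isMaximal
  have := w.isMaximal
  rw [MonoidWithZeroHom.comp_apply, relNorm_eq_pow_of_isMaximal w.asIdeal v.asIdeal, map_pow,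
    pairCharacter_asIdeal, pairCharacter_asIdeal, ← absNorm_pow_inertiaDeg v.asIdeal w.asIdeal,
    pairSymbol_pow]

lemma natCard_quotient_eq_absNorm (I : Ideal (𝓞 K)) : Nat.card (𝓞 K ⧸ I) = absNorm I :=
  (absNorm_apply I).symm

variable {a b}

lemma pairCharacter_asIdeal_eq_one_iff (ha : a % 8 = 1) (hb : b % 8 = 1)
    (v : HeightOneSpectrum (𝓞 K)) : pairCharacter a b K v.asIdeal = 1 ↔
      IsSquare (a : 𝓞 K ⧸ v.asIdeal) ∨ IsSquare (b : 𝓞 K ⧸ v.asIdeal) := by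
  have := v.isMaximal
  let := Ideal.Quotient.field v.asIdeal
  have : Finite (𝓞 K ⧸ v.asIdeal) := v.asIdeal.finiteQuotientOfFreeOfNeBot v.ne_bot
  rw [isSquare_natCast_iff_legendreSym ha, isSquare_natCast_iff_legendreSym hb,
    natCard_quotient_eq_absNorm, pairCharacter_asIdeal, pairSymbol_eq_one_iff]

lemma residueSymbol_mul {d e : 𝓞 K} {v : HeightOneSpectrum (𝓞 K)} (h : d * e ∉ v.asIdeal) :
    residueSymbol (d * e) v = residueSymbol d v * residueSymbol e v := by
  have hsq : IsSquare (Ideal.Quotient.mk v.asIdeal (d * e)) ↔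
      (IsSquare (Ideal.Quotient.mk v.asIdeal d) ↔ IsSquare (Ideal.Quotient.mk v.asIdeal e)) := by
    have := v.isMaximal
    let := Ideal.Quotient.field v.asIdeal
    have : Finite (𝓞 K ⧸ v.asIdeal) := v.asIdeal.finiteQuotientOfFreeOfNeBot v.ne_bot
    rw [← Ideal.Quotient.eq_zero_iff_mem, map_mul] at h
    rw [map_mul]
    exact isSquare_mul_iff_of_ne_zero (left_ne_zero_of_mul h) (right_ne_zero_of_mul h)
  simp only [residueSymbol, hsq]
  split_ifs <;> grind

lemma finite_setOf_pairCharacter_ne (ha : a % 8 = 1) (hb : b % 8 = 1) :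
    {v : HeightOneSpectrum (𝓞 K) | pairCharacter a b K v.asIdeal ≠
      (1 + residueSymbol (a : 𝓞 K) v + residueSymbol (b : 𝓞 K) v -
        residueSymbol (a * b : 𝓞 K) v) / 2}.Finite := by
  have hab : (a * b : 𝓞 K) ≠ 0 :=
    mul_ne_zero (mod_cast (Fact.out : a.Prime).ne_zero) (mod_cast (Fact.out : b.Prime).ne_zero)
  refine (finite_setOf_mem_asIdeal hab).subset fun v hv => ?_
  by_contra habv
  refine hv ?_
  have hone := pairCharacter_eq_one_or_neg_one a b v.ne_bot
  rw [residueSymbol_mul habv, residueSymbol, residueSymbol, map_natCast, map_natCast]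
  split_ifs with h h' h'
  · rw [(pairCharacter_asIdeal_eq_one_iff ha hb v).mpr (.inl h)]
    norm_num
  · rw [(pairCharacter_asIdeal_eq_one_iff ha hb v).mpr (.inl h)]
    norm_num
  · rw [(pairCharacter_asIdeal_eq_one_iff ha hb v).mpr (.inr h')]
    norm_num
  · rw [hone.resolve_left (mt (pairCharacter_asIdeal_eq_one_iff ha hb v).mp (not_or.mpr ⟨h, h'⟩))]
    norm_num

end PairCharacter

section TameLegendre

/-- The Legendre symbol at `q` of the prime-to-`q` part. -/
def tameLegendre (q : ℕ) [Fact q.Prime] : ℕ →*₀ ℤ where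
  toFun n := legendreSym q (ordCompl[q] n : ℕ)
  map_zero' := by simp
  map_one' := by simp
  map_mul' m n := by rw [Nat.ordCompl_mul, Nat.cast_mul, legendreSym.mul]

variable {q : ℕ} [Fact q.Prime]

lemma tameLegendre_eq_legendreSym {n : ℕ} (h : ¬ q ∣ n) : tameLegendre q n = legendreSym q n := by
  change legendreSym q (ordCompl[q] n : ℕ) = _
  rw [(Nat.ordCompl_eq_self_iff_zero_or_not_dvd n Fact.out).mpr (.inr h)]

lemma tameLegendre_self : tameLegendre q q = 1 := by
  change legendreSym q (ordCompl[q] q : ℕ) = 1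
  have := Nat.ordCompl_self_pow (p := q) (k := 1) Fact.out
  rw [pow_one] at this
  rw [this, Nat.cast_one, legendreSym.at_one]

lemma tameLegendre_sq {n : ℕ} (hn : n ≠ 0) : tameLegendre q (n ^ 2) = 1 := by
  have h := Nat.not_dvd_ordCompl (p := q) Fact.out hn
  rw [map_pow]
  refine legendreSym.sq_one q ?_
  rwa [Int.cast_natCast, Ne, ZMod.natCast_eq_zero_iff]

lemma legendreSym_natAbs (hq : q % 4 = 1) (n : ℤ) : legendreSym q n.natAbs = legendreSym q n := by
  obtain h | h := n.natAbs_eq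
  · rw [← h]
  · conv_rhs => rw [h]
    rw [legendreSym.at_neg (by rintro rfl; norm_num at hq), ZMod.χ₄_nat_one_mod_four hq, one_mul]

lemma tameLegendre_natAbs_eq_one (hq : q % 4 = 1) {n y : ℤ} (hn : (n : ZMod q) = y ^ 2)
    (hy : (y : ZMod q) ≠ 0) : tameLegendre q n.natAbs = 1 := by
  have hn₀ : (n : ZMod q) ≠ 0 := hn ▸ pow_ne_zero 2 hy
  rw [tameLegendre_eq_legendreSym, legendreSym_natAbs hq, legendreSym.eq_one_iff q hn₀, hn]
  · exact ⟨y, sq _⟩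
  · rwa [← Int.natCast_dvd, ← ZMod.intCast_zmod_eq_zero_iff_dvd]

lemma tameLegendre_sq_sub_mul_sq_of_isCoprime (hq : q % 4 = 1) {b : ℕ} (hb : (b : ZMod q) = 1)
    {x y : ℤ} (hxy : IsCoprime x y) : tameLegendre q (x ^ 2 - q * b * y ^ 2).natAbs = 1 := by
  by_cases hx : (x : ZMod q) = 0
  · obtain ⟨z, rfl⟩ := (ZMod.intCast_zmod_eq_zero_iff_dvd x q).mp hx
    have hy : (y : ZMod q) ≠ 0 := by
      obtain ⟨u, v, huv⟩ := hxy
      rintro hy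
      simpa [hy] using congr_arg (Int.cast : ℤ → ZMod q) huv
    have hfac : (q * z) ^ 2 - q * b * y ^ 2 = -(q * (b * y ^ 2 - q * z ^ 2)) := by ring
    rw [hfac, Int.natAbs_neg, Int.natAbs_mul, Int.natAbs_natCast, map_mul, tameLegendre_self,
      one_mul, tameLegendre_natAbs_eq_one hq (y := y) (by simp [hb]) hy]
  · exact tameLegendre_natAbs_eq_one hq (by simp) hx

lemma tameLegendre_sq_sub_mul_sq (hq : q % 4 = 1) {b : ℕ} (hb : (b : ZMod q) = 1) {x y : ℤ}
    (hxy : x ≠ 0 ∨ y ≠ 0) : tameLegendre q (x ^ 2 - q * b * y ^ 2).natAbs = 1 := by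
  obtain ⟨g, x', y', hg, hcop, rfl, rfl⟩ := Int.exists_gcd_one' (Int.gcd_pos_iff.mpr hxy)
  have hfac : (x' * g) ^ 2 - q * b * (y' * g) ^ 2 = (g : ℤ) ^ 2 * (x' ^ 2 - q * b * y' ^ 2) := by
    ring
  rw [hfac, Int.natAbs_mul, Int.natAbs_pow, Int.natAbs_natCast, map_mul, tameLegendre_sq hg.ne',
    one_mul]
  exact tameLegendre_sq_sub_mul_sq_of_isCoprime hq hb (Int.isCoprime_iff_gcd_eq_one.mpr hcop)

lemma tameLegendre_natAbs_eq_one_of_eq_sq_sub_mul_sq (hq : q % 4 = 1) {b : ℕ}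
    (hb : (b : ZMod q) = 1) {n : ℤ} (hn : n ≠ 0) {x y : ℚ} (h : (n : ℚ) = x ^ 2 - q * b * y ^ 2) :
    tameLegendre q n.natAbs = 1 := by
  have hc : (x.den * y.den : ℤ) ≠ 0 := by simp
  have hint : ((x.den * y.den : ℤ).natAbs : ℤ) ^ 2 * n =
      (x.num * y.den) ^ 2 - q * b * (y.num * x.den) ^ 2 := by
    rw [Int.natAbs_pow_two, ← Int.cast_inj (α := ℚ)]
    push_cast
    rw [h, ← x.mul_den_eq_num, ← y.mul_den_eq_num]
    ring
  have hxy : x.num * y.den ≠ 0 ∨ y.num * x.den ≠ 0 := by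
    by_contra! h₀
    rw [h₀.1, h₀.2] at hint
    simp [hn] at hint
  have key := tameLegendre_sq_sub_mul_sq hq hb hxy
  rwa [← hint, Int.natAbs_mul, Int.natAbs_pow, Int.natAbs_natCast, map_mul,
    tameLegendre_sq (Int.natAbs_ne_zero.mpr hc), one_mul] at key

end TameLegendre

section NormForm

open QuadraticAlgebra

variable {K N : Type*} [Field K] [Field N] [Algebra K N]

lemma exists_norm_eq_sq_sub_mul_sq {d : K} (hd : ¬ IsSquare d)
    (hdN : IsSquare (algebraMap K N d)) (z : N) :
    ∃ x y : K, Algebra.norm K z = x ^ 2 - d * y ^ 2 := by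
  obtain ⟨r, hr⟩ := hdN
  have := fact_forall_sq_ne_of_not_isSquare hd
  let f : QuadraticAlgebra K d 0 →ₐ[K] N := lift ⟨r, by simp [← hr, Algebra.smul_def]⟩
  let := f.toAlgebra
  have : IsScalarTower K (QuadraticAlgebra K d 0) N := .of_algebraMap_eq' f.comp_algebraMap.symm
  rw [← Algebra.norm_norm (S := QuadraticAlgebra K d 0), algebraNorm_eq_norm,
    norm_eq_sq_sub_mul_sq]
  exact ⟨_, _, rfl⟩

end NormForm

section TrivialCharacter

lemma not_isSquare_natCast_mul_prime {m p : ℕ} (hp : p.Prime) (h : ¬ p ∣ m) :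
    ¬ IsSquare ((m * p : ℕ) : ℚ) := by
  rw [Rat.isSquare_natCast_iff]
  rintro ⟨r, hr⟩
  obtain ⟨t, rfl⟩ : p ∣ r := (or_self_iff).mp (hp.dvd_mul.mp ⟨m, by rw [← hr, mul_comm]⟩)
  exact h ⟨t * t, Nat.eq_of_mul_eq_mul_right hp.pos (by rw [hr]; ring)⟩

open NumberField IsDedekindDomain Ideal UniqueFactorizationMonoid

variable {K : Type*} [Field K] [NumberField K]

omit [NumberField K] in
lemma isSquare_of_isSquare_coe {d : 𝓞 K} (hd : IsSquare (d : K)) : IsSquare d := by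
  obtain ⟨r, hr⟩ := hd
  have hint : IsIntegral ℤ r := .of_pow two_pos (by rw [sq, ← hr]; exact d.isIntegral_coe)
  exact ⟨⟨r, hint⟩, RingOfIntegers.ext hr⟩

omit [NumberField K] in
lemma isSquare_natCast_quotient {n : ℕ} (hn : IsSquare (n : K)) (I : Ideal (𝓞 K)) :
    IsSquare (n : 𝓞 K ⧸ I) := by
  simpa using (isSquare_of_isSquare_coe (d := (n : 𝓞 K)) (by simpa using hn)).map
    (Ideal.Quotient.mk I)

variable {a b : ℕ} [Fact a.Prime] [Fact b.Prime]

lemma pairCharacter_eq_one_of_isSquare (ha : a % 8 = 1) (hb : b % 8 = 1)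
    (h : IsSquare (a : K) ∨ IsSquare (b : K)) {I : Ideal (𝓞 K)} (hI : I ≠ ⊥) :
    pairCharacter a b K I = 1 := by
  rw [pairCharacter, completelyMultiplicative_apply _ hI]
  refine Multiset.prod_eq_one fun x hx => ?_
  obtain ⟨P, hP, rfl⟩ := Multiset.mem_map.mp hx
  have hprime := prime_of_normalized_factor P hP
  let v : HeightOneSpectrum (𝓞 K) := ⟨P, isPrime_of_prime hprime, hprime.ne_zero⟩
  rw [← pairCharacter_asIdeal a b v, pairCharacter_asIdeal_eq_one_iff ha hb]
  exact h.imp (isSquare_natCast_quotient · P) (isSquare_natCast_quotient · P)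

lemma exists_absNorm_eq_pow {p : ℕ} (hp : p.Prime) {v : HeightOneSpectrum (𝓞 K)}
    (h : (p : 𝓞 K ⧸ v.asIdeal) = 0) : ∃ n, absNorm v.asIdeal = p ^ n := by
  have := v.isMaximal
  let := Ideal.Quotient.field v.asIdeal
  have : Finite (𝓞 K ⧸ v.asIdeal) := v.asIdeal.finiteQuotientOfFreeOfNeBot v.ne_bot
  have := Fintype.ofFinite (𝓞 K ⧸ v.asIdeal)
  have := (CharP.charP_iff_prime_eq_zero (R := 𝓞 K ⧸ v.asIdeal) hp).mpr h
  obtain ⟨n, -, hn⟩ := FiniteField.card (𝓞 K ⧸ v.asIdeal) p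
  exact ⟨n, by rw [← natCard_quotient_eq_absNorm, Nat.card_eq_fintype_card, hn]⟩

lemma natCast_eq_zero_of_dvd_absNorm {p : ℕ} (hp : p.Prime) {v : HeightOneSpectrum (𝓞 K)}
    (h : p ∣ absNorm v.asIdeal) : (p : 𝓞 K ⧸ v.asIdeal) = 0 := by
  have := v.isMaximal
  let := Ideal.Quotient.field v.asIdeal
  have : Finite (𝓞 K ⧸ v.asIdeal) := v.asIdeal.finiteQuotientOfFreeOfNeBot v.ne_bot
  have := Fintype.ofFinite (𝓞 K ⧸ v.asIdeal)
  obtain ⟨n, hr, hn⟩ := FiniteField.card (𝓞 K ⧸ v.asIdeal) (ringChar (𝓞 K ⧸ v.asIdeal))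
  rw [← natCard_quotient_eq_absNorm, Nat.card_eq_fintype_card, hn] at h
  rw [(Nat.prime_dvd_prime_iff_eq hp hr).mp (hp.dvd_of_dvd_pow h)]
  exact ringChar.Nat.cast_ringChar

lemma pairCharacter_asIdeal_eq_tameLegendre (ha : a % 8 = 1) (hb : b % 8 = 1)
    (hba : (b : ZMod a) = 1) (h : IsSquare ((a * b : ℕ) : K)) (v : HeightOneSpectrum (𝓞 K)) :
    pairCharacter a b K v.asIdeal = tameLegendre a (absNorm v.asIdeal) := by
  by_cases hav : (a : 𝓞 K ⧸ v.asIdeal) = 0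
  · obtain ⟨n, hn⟩ := exists_absNorm_eq_pow Fact.out hav
    rw [(pairCharacter_asIdeal_eq_one_iff ha hb v).mpr (.inl (hav ▸ .zero)), hn, map_pow,
      tameLegendre_self, one_pow, Int.cast_one]
  rw [tameLegendre_eq_legendreSym (mt (natCast_eq_zero_of_dvd_absNorm Fact.out) hav)]
  by_cases hbv : (b : 𝓞 K ⧸ v.asIdeal) = 0
  · obtain ⟨n, hn⟩ := exists_absNorm_eq_pow Fact.out hbv
    have hleg : legendreSym a b = 1 := by
      rw [legendreSym, Int.cast_natCast, hba, MulChar.map_one]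
    rw [(pairCharacter_asIdeal_eq_one_iff ha hb v).mpr (.inr (hbv ▸ .zero)), hn,
      legendreSym_natCast_pow, hleg, one_pow, Int.cast_one]
  have := v.isMaximal
  let := Ideal.Quotient.field v.asIdeal
  have : Finite (𝓞 K ⧸ v.asIdeal) := v.asIdeal.finiteQuotientOfFreeOfNeBot v.ne_bot
  have hmul := isSquare_natCast_quotient h v.asIdeal
  rw [Nat.cast_mul] at hmul
  have hiff := (isSquare_mul_iff_of_ne_zero hav hbv).mp hmul
  rw [isSquare_natCast_iff_legendreSym ha, isSquare_natCast_iff_legendreSym hb,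
    natCard_quotient_eq_absNorm] at hiff
  have ha₀ : legendreSym a (absNorm v.asIdeal) ≠ 0 := by
    rw [Ne, legendreSym.eq_zero_iff, Int.cast_natCast, ZMod.natCast_eq_zero_iff]
    exact mt (natCast_eq_zero_of_dvd_absNorm Fact.out) hav
  obtain h | h := (legendreSym_eq_zero_or_one_or_neg_one a _).resolve_left ha₀ <;>
    simp only [pairCharacter_asIdeal, pairSymbol, ← not_iff_not.mp hiff, h] <;> norm_num

lemma pairCharacter_eq_tameLegendre_absNorm (ha : a % 8 = 1) (hb : b % 8 = 1)
    (hba : (b : ZMod a) = 1) (h : IsSquare ((a * b : ℕ) : K)) (I : Ideal (𝓞 K)) :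
    pairCharacter a b K I = tameLegendre a (absNorm I) := by
  let T : Ideal (𝓞 K) →*₀ ℝ :=
    (Int.castRingHom ℝ).toMonoidWithZeroHom.comp ((tameLegendre a).comp absNorm)
  suffices hT : pairCharacter a b K = T from DFunLike.congr_fun hT I
  exact idealHom_ext (pairCharacter_asIdeal_eq_tameLegendre ha hb hba h)

lemma pairCharacter_span_singleton_eq_one_of_isSquare_mul (ha : a % 8 = 1) (hb : b % 8 = 1)
    (hba : (b : ZMod a) = 1) (h : IsSquare ((a * b : ℕ) : K)) {z : 𝓞 K} (hz : z ≠ 0) :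
    pairCharacter a b K (span {z}) = 1 := by
  have hab : ¬ IsSquare ((a * b : ℕ) : ℚ) := by
    rw [mul_comm]
    refine not_isSquare_natCast_mul_prime Fact.out fun hdvd => one_ne_zero (α := ZMod a) ?_
    rw [← hba, (ZMod.natCast_eq_zero_iff b a).mpr hdvd]
  obtain ⟨x, y, hxy⟩ := exists_norm_eq_sq_sub_mul_sq hab (by simpa using h) (z : K)
  rw [pairCharacter_eq_tameLegendre_absNorm ha hb hba h, absNorm_span_singleton,
    tameLegendre_natAbs_eq_one_of_eq_sq_sub_mul_sq (x := x) (y := y) (by lia) hba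
      (Algebra.norm_ne_zero_iff.mpr hz), Int.cast_one]
  rw [Algebra.coe_norm_int, hxy, Nat.cast_mul]

end TrivialCharacter

section NormGroup

open QuadraticAlgebra

variable {K : Type*} [Field K]

/-- The group of nonzero values of the form `x² - d y²`; it is the norm group of `K(√d)` when `d` is
not a square. -/
def normFormSubgroup (d : K) : Subgroup Kˣ :=
  (Units.map (norm : QuadraticAlgebra K d 0 →* K)).range

/-- The subgroup generated by the norms from `K(√a)`, `K(√b)` and `K(√ab)`. -/
def pairNormSubgroup (a b : K) : Subgroup Kˣ :=
  normFormSubgroup a ⊔ normFormSubgroup b ⊔ normFormSubgroup (a * b)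

lemma normFormSubgroup_le_pairNormSubgroup_left (a b : K) :
    normFormSubgroup a ≤ pairNormSubgroup a b :=
  fun _ hu => Subgroup.mem_sup_left (Subgroup.mem_sup_left hu)

lemma normFormSubgroup_le_pairNormSubgroup_right (a b : K) :
    normFormSubgroup b ≤ pairNormSubgroup a b :=
  fun _ hu => Subgroup.mem_sup_left (Subgroup.mem_sup_right hu)

lemma normFormSubgroup_mul_le_pairNormSubgroup (a b : K) :
    normFormSubgroup (a * b) ≤ pairNormSubgroup a b :=
  fun _ hu => Subgroup.mem_sup_right hu

lemma mem_normFormSubgroup_iff {d : K} {u : Kˣ} :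
    u ∈ normFormSubgroup d ↔ ∃ x y : K, (u : K) = x ^ 2 - d * y ^ 2 := by
  refine ⟨?_, ?_⟩
  · rintro ⟨z, rfl⟩
    exact ⟨_, _, norm_eq_sq_sub_mul_sq (z : QuadraticAlgebra K d 0)⟩
  · rintro ⟨x, y, h⟩
    have hnorm : norm (⟨x, y⟩ : QuadraticAlgebra K d 0) = u := by rw [norm_eq_sq_sub_mul_sq, h]
    have hunit : IsUnit (⟨x, y⟩ : QuadraticAlgebra K d 0) :=
      isUnit_iff_norm_isUnit.mpr (hnorm ▸ u.isUnit)
    exact ⟨hunit.unit, Units.ext hnorm⟩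

end NormGroup

section PrincipalCharacter

open NumberField Ideal

variable (a b : ℕ) [Fact a.Prime] [Fact b.Prime]

/-- The extension to `K` of `x ↦ pairCharacter a b K (span {x})`. -/
noncomputable def principalCharacter (K : Type*) [Field K] [NumberField K] : K →*₀ ℝ :=
  (IsLocalization.toLocalizationMap (nonZeroDivisors (𝓞 K)) K).lift₀
    ((pairCharacter a b K).comp (Submodule.spanSingleton (𝓞 K))) fun x => by
      have hx : span {(x : 𝓞 K)} ≠ ⊥ := by simp
      obtain h | h := pairCharacter_eq_one_or_neg_one a b hx
      · exact isUnit_iff_ne_zero.mpr (h.trans_ne one_ne_zero)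
      · exact isUnit_iff_ne_zero.mpr (h.trans_ne (by norm_num))

variable {K : Type*} [Field K] [NumberField K]

lemma principalCharacter_coe (x : 𝓞 K) :
    principalCharacter a b K x = pairCharacter a b K (span {x}) :=
  (IsLocalization.toLocalizationMap (nonZeroDivisors (𝓞 K)) K).lift_eq _ x

lemma principalCharacter_algebraNorm {N : Type*} [Field N] [NumberField N] [Algebra K N] (z : N) :
    principalCharacter a b K (Algebra.norm K z) = principalCharacter a b N z := by
  have hint : ∀ x : 𝓞 N,
      principalCharacter a b K (Algebra.norm K (x : N)) = principalCharacter a b N x := fun x => by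
    rw [principalCharacter_coe, ← pairCharacter_relNorm a b (K := K), relNorm_singleton,
      ← principalCharacter_coe]
    exact congr_arg _ (Algebra.algebraMap_intNorm (A := 𝓞 K) (K := K) (L := N) x).symm
  obtain ⟨x, y, -, rfl⟩ := IsFractionRing.div_surjective (𝓞 N) z
  rw [div_eq_mul_inv, map_mul, Algebra.norm_inv, map_mul, map_mul, map_inv₀, map_inv₀, hint, hint]

variable {a b}

lemma principalCharacter_eq_one (ha : a % 8 = 1) (hb : b % 8 = 1) (hba : (b : ZMod a) = 1)
    (h : IsSquare (a : K) ∨ IsSquare (b : K) ∨ IsSquare (a * b : K)) {z : K} (hz : z ≠ 0) :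
    principalCharacter a b K z = 1 := by
  have hint : ∀ x : 𝓞 K, x ≠ 0 → principalCharacter a b K x = 1 := fun x hx => by
    rw [principalCharacter_coe]
    obtain h | h := or_assoc.mpr h
    · exact pairCharacter_eq_one_of_isSquare ha hb h (by simpa using hx)
    · exact pairCharacter_span_singleton_eq_one_of_isSquare_mul ha hb hba (mod_cast h) hx
  obtain ⟨x, y, -, rfl⟩ := IsFractionRing.div_surjective (𝓞 K) z
  obtain ⟨hx, hy⟩ := div_ne_zero_iff.mp hz
  rw [map_div₀, hint x (by simpa using hx), hint y (by simpa using hy), div_one]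

open QuadraticAlgebra in
lemma normFormSubgroup_le_ker (ha : a % 8 = 1) (hb : b % 8 = 1) (hba : (b : ZMod a) = 1) {d : K}
    (hd : ¬ IsSquare d) (h : d = a ∨ d = b ∨ d = a * b) :
    normFormSubgroup d ≤ (Units.map (principalCharacter a b K : K →* ℝ)).ker := by
  have := fact_forall_sq_ne_of_not_isSquare hd
  have hω : IsSquare (algebraMap K (QuadraticAlgebra K d 0) d) := ⟨ω, by rw [← sq, omega_sq]⟩
  rintro _ ⟨z, rfl⟩
  refine Units.ext ?_
  change principalCharacter a b K (norm (z : QuadraticAlgebra K d 0)) = 1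
  rw [← algebraNorm_eq_norm, principalCharacter_algebraNorm]
  refine principalCharacter_eq_one ha hb hba ?_ z.ne_zero
  obtain rfl | rfl | rfl := h
  · exact .inl (by simpa using hω)
  · exact .inr (.inl (by simpa using hω))
  · exact .inr (.inr (by simpa using hω))

lemma pairNormSubgroup_le_ker (ha : a % 8 = 1) (hb : b % 8 = 1) (hba : (b : ZMod a) = 1)
    (ha' : ¬ IsSquare (a : K)) (hb' : ¬ IsSquare (b : K)) (hab : ¬ IsSquare (a * b : K)) :
    pairNormSubgroup (a : K) b ≤ (Units.map (principalCharacter a b K : K →* ℝ)).ker :=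
  sup_le (sup_le (normFormSubgroup_le_ker ha hb hba ha' (.inl rfl))
    (normFormSubgroup_le_ker ha hb hba hb' (.inr (.inl rfl))))
    (normFormSubgroup_le_ker ha hb hba hab (.inr (.inr rfl)))

open QuadraticAlgebra in
lemma exists_mem_normFormSubgroup_notMem (ha : a % 8 = 1) (hb : b % 8 = 1)
    (hba : (b : ZMod a) = 1) {d : K} (hd : ¬ IsSquare d)
    (h : ∀ c : K, c = a ∨ c = b ∨ c = a * b → ¬ IsSquare c ∧ ¬ IsSquare (d * c)) :
    ∃ u ∈ normFormSubgroup d, u ∉ pairNormSubgroup (a : K) b := by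
  have := fact_forall_sq_ne_of_not_isSquare hd
  have hN : ∀ c : K, c = a ∨ c = b ∨ c = a * b →
      ¬ IsSquare (algebraMap K (QuadraticAlgebra K d 0) c) := fun c hc hsq =>
    (isSquare_or_isSquare_mul_of_isSquare_algebraMap hsq).elim (h c hc).1 (h c hc).2
  obtain ⟨x, hx, hΦ⟩ := exists_map_span_singleton_eq_neg_one (K := QuadraticAlgebra K d 0)
    (Φ := pairCharacter a b _) (a := a) (b := b)
    (fun I hI => pairCharacter_eq_one_or_neg_one a b hI)
    (by simpa using hN a (.inl rfl)) (by simpa using hN b (.inr (.inl rfl)))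
    (by simpa using hN (a * b) (.inr (.inr rfl))) (finite_setOf_pairCharacter_ne ha hb)
  have hx' : (x : QuadraticAlgebra K d 0) ≠ 0 := RingOfIntegers.coe_ne_zero_iff.mpr hx
  refine ⟨Units.map norm (Units.mk0 _ hx'), ⟨_, rfl⟩, fun hV => ?_⟩
  have hψ := congr_arg Units.val (pairNormSubgroup_le_ker ha hb hba (h a (.inl rfl)).1
    (h b (.inr (.inl rfl))).1 (h (a * b) (.inr (.inr rfl))).1 hV)
  change principalCharacter a b K (norm (x : QuadraticAlgebra K d 0)) = 1 at hψ
  rw [← algebraNorm_eq_norm, principalCharacter_algebraNorm, principalCharacter_coe, hΦ] at hψ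
  norm_num at hψ

end PrincipalCharacter

section FiniteIndex

variable {G G' : Type*} [CommGroup G] [Group G'] {F H : Subgroup G} {n : ℕ}

lemma relIndex_ne_zero_of_fg_of_pow_mem (hF : F.FG) (hn : n ≠ 0) (hpow : ∀ g ∈ F, g ^ n ∈ H) :
    H.relIndex F ≠ 0 := by
  have hle : F.map (powMonoidHom n) ≤ H := Subgroup.map_le_iff_le_comap.mpr hpow
  have := Subgroup.isFiniteRelIndex_map_powMonoidHom_of_fg hF hn
  exact ne_zero_of_dvd_ne_zero this.relIndex_ne_zero (Subgroup.relIndex_dvd_of_le_left F hle)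

lemma finiteIndex_of_fg_sup_eq_top (hF : F.FG) (hFH : F ⊔ H = ⊤) (hn : n ≠ 0)
    (hpow : ∀ g, g ^ n ∈ H) : H.FiniteIndex := by
  refine ⟨?_⟩
  rw [← Subgroup.relIndex_top_right, ← hFH, Subgroup.relIndex_sup_right]
  exact relIndex_ne_zero_of_fg_of_pow_mem hF hn fun g _ => hpow g

lemma finiteIndex_of_map_of_fg_ker {f : G →* G'} [(H.map f).FiniteIndex] (hker : f.ker.FG)
    (hn : n ≠ 0) (hpow : ∀ g, g ^ n ∈ H) : H.FiniteIndex := by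
  refine ⟨?_⟩
  rw [← Subgroup.relIndex_mul_index (le_sup_left : H ≤ H ⊔ f.ker), Subgroup.relIndex_sup_left]
  have hmap : (H.map f).index ≠ 0 := Subgroup.FiniteIndex.index_ne_zero
  rw [Subgroup.index_map] at hmap
  exact mul_ne_zero (relIndex_ne_zero_of_fg_of_pow_mem hker hn fun g _ => hpow g)
    (left_ne_zero_of_mul hmap)

end FiniteIndex

section NormGroupFiniteIndex

open NumberField IsDedekindDomain Ideal
open scoped nonZeroDivisors

lemma eq_top_of_forall_mk0_asIdeal_mem {R K : Type*} [CommRing R] [IsDedekindDomain R] [Field K]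
    [Algebra R K] [IsFractionRing R K] {H : Subgroup (FractionalIdeal R⁰ K)ˣ}
    (h : ∀ v : HeightOneSpectrum R,
      FractionalIdeal.mk0 K ⟨v.asIdeal, mem_nonZeroDivisors_of_ne_zero v.ne_bot⟩ ∈ H) :
    H = ⊤ := by
  have hint (I : Ideal R) (hI : I ∈ (Ideal R)⁰) : FractionalIdeal.mk0 K ⟨I, hI⟩ ∈ H := by
    induction I using UniqueFactorizationMonoid.induction_on_prime with
    | h₁ => exact absurd rfl (nonZeroDivisors.ne_zero hI)
    | h₂ I hIunit =>
      obtain rfl : I = 1 := isUnit_iff_eq_one.mp hIunit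
      exact (map_one (FractionalIdeal.mk0 (R := R) K)).symm ▸ H.one_mem
    | h₃ I P hI₀ hP ih =>
      have hv := h ⟨P, isPrime_of_prime hP, hP.ne_zero⟩
      have := H.mul_mem hv (ih (mem_nonZeroDivisors_of_ne_zero hI₀))
      rwa [← map_mul] at this
  refine (Subgroup.eq_top_iff' H).mpr fun J => ?_
  obtain ⟨x, I, hx, hJ⟩ := FractionalIdeal.exists_eq_spanSingleton_mul (J : FractionalIdeal R⁰ K)
  have hI : I ≠ 0 := by
    rintro rfl
    simp at hJ
  have hmem := H.mul_mem
    (H.inv_mem (hint (span {x}) (mem_nonZeroDivisors_of_ne_zero (by simpa using hx))))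
    (hint I (mem_nonZeroDivisors_of_ne_zero hI))
  convert hmem
  refine Units.ext (hJ.trans ?_)
  simp [FractionalIdeal.coeIdeal_span_singleton]

variable (K : Type*) [Field K] [NumberField K]

lemma ker_toPrincipalIdeal :
    (toPrincipalIdeal (𝓞 K) K).ker = (Units.map (algebraMap (𝓞 K) K : 𝓞 K →* K)).range := by
  have hint (x : Kˣ) (hx : x ∈ (toPrincipalIdeal (𝓞 K) K).ker) : ∃ r : 𝓞 K, (r : K) = x := by
    refine (FractionalIdeal.mem_one_iff (𝓞 K)⁰).mp ?_
    rw [← Units.val_one, ← MonoidHom.mem_ker.mp hx, coe_toPrincipalIdeal]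
    exact FractionalIdeal.mem_spanSingleton_self _ _
  refine le_antisymm (fun x hx => ?_) ?_
  · obtain ⟨r, hr⟩ := hint x hx
    obtain ⟨s, hs⟩ := hint x⁻¹ (inv_mem hx)
    have hrs : r * s = 1 := RingOfIntegers.ext (by simp [hr, hs])
    exact ⟨⟨r, s, hrs, by rw [mul_comm, hrs]⟩, Units.ext hr⟩
  · rintro _ ⟨u, rfl⟩
    refine MonoidHom.mem_ker.mpr (Units.ext ?_)
    rw [coe_toPrincipalIdeal]
    change FractionalIdeal.spanSingleton _ (algebraMap (𝓞 K) K u) = _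
    rw [← FractionalIdeal.coeIdeal_span_singleton, span_singleton_eq_top.mpr u.isUnit,
      FractionalIdeal.coeIdeal_top, Units.val_one]

lemma fg_ker_toPrincipalIdeal : (toPrincipalIdeal (𝓞 K) K).ker.FG := by
  rw [ker_toPrincipalIdeal, ← Group.fg_iff_subgroup_fg]
  have : Group.FG (𝓞 K)ˣ := Group.fg_iff_monoid_fg.mpr inferInstance
  exact Group.fg_range _

variable (L : Type*) [Field L] [NumberField L] [Algebra K L]

lemma exists_finite_relNorm_eq_norm_mul :
    ∃ S : Set (FractionalIdeal (𝓞 K)⁰ K)ˣ, S.Finite ∧ ∀ I : Ideal (𝓞 L), I ≠ ⊥ →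
      ∃ z : Lˣ, ∃ J ∈ S, (relNorm (𝓞 K) I : FractionalIdeal (𝓞 K)⁰ K) =
        FractionalIdeal.spanSingleton _ (Algebra.norm K (z : L)) * (J : FractionalIdeal _ K) := by
  choose R hR using ClassGroup.mk0_surjective (R := 𝓞 L)
  have hR₀ (c : ClassGroup (𝓞 L)) : relNorm (𝓞 K) (R c : Ideal (𝓞 L)) ≠ ⊥ := by
    rw [Ne, relNorm_eq_bot_iff]
    exact nonZeroDivisors.ne_zero (R c).2
  refine ⟨Set.range fun c => Units.mk0 (relNorm (𝓞 K) (R c : Ideal (𝓞 L)) :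
    FractionalIdeal (𝓞 K)⁰ K) (FractionalIdeal.coeIdeal_ne_zero.mpr (hR₀ c)),
    Set.finite_range _, fun I hI => ?_⟩
  let c := ClassGroup.mk0 ⟨I, mem_nonZeroDivisors_of_ne_zero hI⟩
  obtain ⟨x, y, hx, hy, hxy⟩ := ClassGroup.mk0_eq_mk0_iff.mp (hR c)
  have hx' : (x : L) ≠ 0 := RingOfIntegers.coe_ne_zero_iff.mpr hx
  have hy' : (y : L) ≠ 0 := RingOfIntegers.coe_ne_zero_iff.mpr hy
  refine ⟨Units.mk0 _ hx' / Units.mk0 _ hy', _, ⟨c, rfl⟩, ?_⟩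
  have hnorm := congr_arg (fun I => (relNorm (𝓞 K) I : FractionalIdeal (𝓞 K)⁰ K)) hxy
  simp only [map_mul, relNorm_singleton, FractionalIdeal.coeIdeal_mul,
    FractionalIdeal.coeIdeal_span_singleton,
    Algebra.algebraMap_intNorm (A := 𝓞 K) (K := K) (L := L)] at hnorm
  have hy₀ : FractionalIdeal.spanSingleton (𝓞 K)⁰ (Algebra.norm K (y : L)) ≠ 0 :=
    FractionalIdeal.spanSingleton_ne_zero_iff.mpr (Algebra.norm_ne_zero_iff.mpr hy')
  refine mul_left_cancel₀ hy₀ (hnorm.symm.trans ?_)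
  rw [← mul_assoc, FractionalIdeal.spanSingleton_mul_spanSingleton, ← map_mul,
    Units.val_div_eq_div_val, Units.val_mk0, Units.val_mk0, Units.val_mk0, mul_div_cancel₀ _ hy']

variable {K L}

lemma exists_relNorm_eq_asIdeal_of_isSquare [Algebra.IsQuadraticExtension K L] {d : 𝓞 K} {θ : 𝓞 L}
    (hθ : θ ^ 2 = algebraMap (𝓞 K) (𝓞 L) d) (hd : ¬ IsSquare (d : K))
    {v : HeightOneSpectrum (𝓞 K)} (hv : 2 * d ∉ v.asIdeal)
    (hsq : IsSquare (Ideal.Quotient.mk v.asIdeal d)) :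
    ∃ I : Ideal (𝓞 L), relNorm (𝓞 K) I = v.asIdeal := by
  have hcount := degreeOneCount_eq_one_add_residueSymbol hθ hd hv
  rw [residueSymbol, if_pos hsq] at hcount
  obtain ⟨⟨P, hP⟩⟩ : Nonempty {P : v.asIdeal.primesOver (𝓞 L) // P.1.inertiaDeg (𝓞 K) = 1} := by
    refine (Nat.card_pos_iff.mp (?_ : 0 < degreeOneCount L v)).1
    exact_mod_cast hcount ▸ (by norm_num : (0 : ℝ) < 1 + 1)
  obtain ⟨hprime, hover⟩ := P.2
  have := v.isMaximal
  have := IsMaximal.of_liesOver_isMaximal P.1 v.asIdeal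
  exact ⟨P.1, by rw [relNorm_eq_pow_of_isMaximal P.1 v.asIdeal, hP, pow_one]⟩

lemma exists_finite_mk0_asIdeal_mem_sup {d : 𝓞 K} (hd : ¬ IsSquare (d : K)) :
    ∃ S : Set (FractionalIdeal (𝓞 K)⁰ K)ˣ, S.Finite ∧
      ∀ v : HeightOneSpectrum (𝓞 K), 2 * d ∉ v.asIdeal →
        IsSquare (Ideal.Quotient.mk v.asIdeal d) →
        FractionalIdeal.mk0 K ⟨v.asIdeal, mem_nonZeroDivisors_of_ne_zero v.ne_bot⟩ ∈
          Subgroup.closure S ⊔ (normFormSubgroup (d : K)).map (toPrincipalIdeal (𝓞 K) K) := by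
  have := fact_forall_sq_ne_of_not_isSquare hd
  obtain ⟨S, hS, hrep⟩ := exists_finite_relNorm_eq_norm_mul K (QuadraticAlgebra K (d : K) 0)
  refine ⟨S, hS, fun v hv hsq => ?_⟩
  let θ : 𝓞 (QuadraticAlgebra K (d : K) 0) := ⟨QuadraticAlgebra.omega, isIntegral_omega d⟩
  have hθ : θ ^ 2 = algebraMap (𝓞 K) (𝓞 (QuadraticAlgebra K (d : K) 0)) d :=
    RingOfIntegers.ext omega_sq
  obtain ⟨I, hI⟩ := exists_relNorm_eq_asIdeal_of_isSquare hθ hd hv hsq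
  have hI₀ : I ≠ ⊥ := by
    rintro rfl
    exact v.ne_bot (hI.symm.trans (relNorm_bot _))
  obtain ⟨z, J, hJ, hIJ⟩ := hrep I hI₀
  rw [sup_comm]
  refine Subgroup.mem_sup.mpr ⟨_, Subgroup.mem_map_of_mem _ ⟨z, rfl⟩, J,
    Subgroup.subset_closure hJ, Units.ext ?_⟩
  rw [hI, algebraNorm_eq_norm] at hIJ
  rw [FractionalIdeal.coe_mk0, Units.val_mul, coe_toPrincipalIdeal]
  exact hIJ.symm

lemma exists_isSquare_mk_of_mul_notMem {a b : 𝓞 K} {v : HeightOneSpectrum (𝓞 K)}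
    (h : a * b ∉ v.asIdeal) :
    IsSquare (Ideal.Quotient.mk v.asIdeal a) ∨ IsSquare (Ideal.Quotient.mk v.asIdeal b) ∨
      IsSquare (Ideal.Quotient.mk v.asIdeal (a * b)) := by
  by_contra! hns
  have := residueSymbol_mul h
  rw [residueSymbol, residueSymbol, residueSymbol, if_neg hns.1, if_neg hns.2.1,
    if_neg hns.2.2] at this
  norm_num at this

lemma exists_fg_sup_map_pairNormSubgroup_eq_top {a b : 𝓞 K} (ha : ¬ IsSquare (a : K))
    (hb : ¬ IsSquare (b : K)) (hab : ¬ IsSquare (a * b : K)) :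
    ∃ F : Subgroup (FractionalIdeal (𝓞 K)⁰ K)ˣ, F.FG ∧
      F ⊔ (pairNormSubgroup (a : K) b).map (toPrincipalIdeal (𝓞 K) K) = ⊤ := by
  have hab' : ¬ IsSquare ((a * b : 𝓞 K) : K) := by simpa using hab
  have h₀ : 2 * (a * b) ≠ 0 := mul_ne_zero two_ne_zero (by rintro h; simp [h] at hab')
  obtain ⟨A, hA, hAmem⟩ := exists_finite_mk0_asIdeal_mem_sup ha
  obtain ⟨B, hB, hBmem⟩ := exists_finite_mk0_asIdeal_mem_sup hb
  obtain ⟨C, hC, hCmem⟩ := exists_finite_mk0_asIdeal_mem_sup hab'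
  let mk (v : HeightOneSpectrum (𝓞 K)) : (FractionalIdeal (𝓞 K)⁰ K)ˣ :=
    FractionalIdeal.mk0 K ⟨v.asIdeal, mem_nonZeroDivisors_of_ne_zero v.ne_bot⟩
  let S := A ∪ B ∪ C ∪ mk '' {v | 2 * (a * b) ∈ v.asIdeal}
  have hS : S.Finite :=
    ((hA.union hB).union hC).union ((finite_setOf_mem_asIdeal h₀).image mk)
  refine ⟨.closure S, (Subgroup.fg_iff _).mpr ⟨S, rfl, hS⟩,
    eq_top_of_forall_mk0_asIdeal_mem fun v => ?_⟩
  have hle {T : Set (FractionalIdeal (𝓞 K)⁰ K)ˣ} {d : K} (hT : T ⊆ S)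
      (hd : normFormSubgroup d ≤ pairNormSubgroup (a : K) b) :
      .closure T ⊔ (normFormSubgroup d).map (toPrincipalIdeal (𝓞 K) K) ≤
        .closure S ⊔ (pairNormSubgroup (a : K) b).map (toPrincipalIdeal (𝓞 K) K) :=
    sup_le_sup (Subgroup.closure_mono hT) (Subgroup.map_mono hd)
  by_cases hv : 2 * (a * b) ∈ v.asIdeal
  · exact Subgroup.mem_sup_left (Subgroup.subset_closure (.inr ⟨v, hv, rfl⟩))
  have hva : 2 * a ∉ v.asIdeal := fun h => hv (by convert v.asIdeal.mul_mem_right b h using 1; ring)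
  have hvb : 2 * b ∉ v.asIdeal := fun h => hv (by convert v.asIdeal.mul_mem_left a h using 1; ring)
  obtain h | h | h := exists_isSquare_mk_of_mul_notMem fun h => hv (v.asIdeal.mul_mem_left 2 h)
  · exact hle (by grind) (normFormSubgroup_le_pairNormSubgroup_left _ _) (hAmem v hva h)
  · exact hle (by grind) (normFormSubgroup_le_pairNormSubgroup_right _ _) (hBmem v hvb h)
  · exact hle (by grind) (by simpa using normFormSubgroup_mul_le_pairNormSubgroup (a : K) b)
      (hCmem v hv h)

lemma sq_mem_pairNormSubgroup {K : Type*} [Field K] (a b : K) (u : Kˣ) :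
    u ^ 2 ∈ pairNormSubgroup a b :=
  normFormSubgroup_le_pairNormSubgroup_left a b (mem_normFormSubgroup_iff.mpr ⟨u, 0, by simp⟩)

theorem finiteIndex_pairNormSubgroup {a b : 𝓞 K} (ha : ¬ IsSquare (a : K))
    (hb : ¬ IsSquare (b : K)) (hab : ¬ IsSquare (a * b : K)) :
    (pairNormSubgroup (a : K) b).FiniteIndex := by
  obtain ⟨F, hF, hsup⟩ := exists_fg_sup_map_pairNormSubgroup_eq_top ha hb hab
  have : Finite ((FractionalIdeal (𝓞 K)⁰ K)ˣ ⧸ (toPrincipalIdeal (𝓞 K) K).range) :=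
    .of_equiv _ (ClassGroup.equiv K).toEquiv
  have hindex : (toPrincipalIdeal (𝓞 K) K).range.index ≠ 0 :=
    Subgroup.index_ne_zero_of_finite
  have : ((pairNormSubgroup (a : K) b).map (toPrincipalIdeal (𝓞 K) K)).FiniteIndex := by
    refine finiteIndex_of_fg_sup_eq_top hF hsup (mul_ne_zero hindex two_ne_zero) fun I => ?_
    obtain ⟨u, hu⟩ := (toPrincipalIdeal (𝓞 K) K).range.pow_index_mem I
    rw [pow_mul, ← hu, ← map_pow]
    exact Subgroup.mem_map_of_mem _ (sq_mem_pairNormSubgroup _ _ u)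
  exact finiteIndex_of_map_of_fg_ker (fg_ker_toPrincipalIdeal K) two_ne_zero
    (sq_mem_pairNormSubgroup _ _)

end NormGroupFiniteIndex

section AuxiliaryPrimes

open QuadraticAlgebra

lemma exists_intermediateField_isSquare_algebraMap_iff {F K : Type*} [Field F] [NeZero (2 : F)]
    [Field K] [Algebra F K] {d : F} (hd : ¬ IsSquare d) (hdK : IsSquare (algebraMap F K d)) :
    ∃ E : IntermediateField F K, ∀ k : F,
      IsSquare (algebraMap F E k) ↔ IsSquare k ∨ IsSquare (d * k) := by
  have := fact_forall_sq_ne_of_not_isSquare hd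
  obtain ⟨r, hr⟩ := hdK
  let f : QuadraticAlgebra F d 0 →ₐ[F] K :=
    QuadraticAlgebra.lift ⟨r, by rw [← hr, zero_smul, add_zero, Algebra.algebraMap_eq_smul_one]⟩
  let e : QuadraticAlgebra F d 0 ≃ₐ[F] f.fieldRange := AlgEquiv.ofInjectiveField f
  refine ⟨f.fieldRange, fun k => ⟨fun hk => ?_, ?_⟩⟩
  · refine isSquare_or_isSquare_mul_of_isSquare_algebraMap ?_
    simpa using hk.map e.symm
  · have hd₀ : algebraMap F f.fieldRange d ≠ 0 := by
      simpa using fun h => hd (by simp [h])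
    have hω : IsSquare (algebraMap F f.fieldRange d) := ⟨e ω, by
      rw [← map_mul, ← sq, omega_sq, AlgEquiv.commutes]⟩
    rintro (hk | hk)
    · exact hk.map _
    · simpa [hd₀] using (hk.map (algebraMap F f.fieldRange)).div hω

lemma not_isSquare_mul_prime_mul_prime {m p q : ℕ} (hm : m ≠ 0) (hp : p.Prime) (hq : q.Prime)
    (hpq : p ≠ q) : ¬ IsSquare (((m * p : ℕ) : ℚ) * (m * q : ℕ)) := fun h => by
  have hm' : (m : ℚ) ≠ 0 := Nat.cast_ne_zero.mpr hm
  refine not_isSquare_natCast_mul_prime hq (m := p)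
    (fun hdvd => hpq ((Nat.prime_dvd_prime_iff_eq hq hp).mp hdvd).symm) ?_
  have hdiv : ((p * q : ℕ) : ℚ) = (m * p : ℕ) * (m * q : ℕ) / m ^ 2 := by
    push_cast
    field_simp
  exact hdiv ▸ h.div (IsSquare.sq (m : ℚ))

variable (K : Type*) [Field K] [NumberField K]

lemma finite_setOf_prime_isSquare_mul {m : ℕ} (hm : m ≠ 0) :
    {q : ℕ | q.Prime ∧ IsSquare ((m * q : ℕ) : K)}.Finite := by
  suffices {q : ℕ | (q.Prime ∧ ¬ q ∣ m) ∧ IsSquare ((m * q : ℕ) : K)}.Finite from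
    (this.union m.divisors.finite_toSet).subset fun q hq => by
      by_cases h : q ∣ m
      · exact .inr (by simp [h, hm])
      · exact .inl ⟨⟨hq.1, h⟩, hq.2⟩
  have hns {q : ℕ} (hq : q.Prime ∧ ¬ q ∣ m) : ¬ IsSquare ((m * q : ℕ) : ℚ) :=
    not_isSquare_natCast_mul_prime hq.1 hq.2
  choose! E hE using fun (q : ℕ) (hq : (q.Prime ∧ ¬ q ∣ m) ∧ IsSquare ((m * q : ℕ) : K)) =>
    exists_intermediateField_isSquare_algebraMap_iff (hns hq.1) (K := K) (by simpa using hq.2)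
  have : Finite (IntermediateField ℚ K) :=
    (Field.exists_primitive_element_iff_finite_intermediateField ℚ K).mp
      ⟨inferInstance, Field.exists_primitive_element ℚ K⟩
  refine Set.Finite.of_finite_image (f := E) (Set.toFinite _) fun p hp q hq hpq => ?_
  by_contra hne
  have hsq := (hE q hq (m * q : ℕ)).mpr (.inr (.mul_self _))
  rw [← hpq] at hsq
  exact ((hE p hp _).mp hsq).elim (hns hq.1)
    (not_isSquare_mul_prime_mul_prime hm hp.1.1 hq.1.1 hne)

lemma exists_prime_modEq_one_not_isSquare_mul {N m₁ m₂ : ℕ} (hN : N ≠ 0) (h₁ : m₁ ≠ 0)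
    (h₂ : m₂ ≠ 0) :
    ∃ q : ℕ, q.Prime ∧ q ≡ 1 [MOD N] ∧
      ¬ IsSquare ((m₁ * q : ℕ) : K) ∧ ¬ IsSquare ((m₂ * q : ℕ) : K) := by
  obtain ⟨B, hB⟩ := ((finite_setOf_prime_isSquare_mul K h₁).union
    (finite_setOf_prime_isSquare_mul K h₂)).bddAbove
  obtain ⟨q, hq, hqB, hqN⟩ := Nat.exists_prime_gt_modEq_one B hN
  exact ⟨q, hq, hqN, fun h => hqB.not_ge (hB (.inl ⟨hq, h⟩)),
    fun h => hqB.not_ge (hB (.inr ⟨hq, h⟩))⟩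

lemma exists_primes_not_isSquare :
    ∃ a b : ℕ, a.Prime ∧ b.Prime ∧ a % 8 = 1 ∧ b % 8 = 1 ∧ (b : ZMod a) = 1 ∧
      ¬ IsSquare (a : K) ∧ ¬ IsSquare (b : K) ∧ ¬ IsSquare (a * b : K) := by
  obtain ⟨a, ha, ha8, hna, -⟩ :=
    exists_prime_modEq_one_not_isSquare_mul K (N := 8) (by norm_num) one_ne_zero one_ne_zero
  obtain ⟨b, hb, hb8a, hnb, hnab⟩ := exists_prime_modEq_one_not_isSquare_mul K (N := 8 * a)
    (mul_ne_zero (by norm_num) ha.ne_zero) one_ne_zero ha.ne_zero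
  exact ⟨a, b, ha, hb, ha8, hb8a.of_mul_right a,
    by simpa using (ZMod.natCast_eq_natCast_iff _ _ _).mpr (hb8a.of_mul_left 8),
    by simpa using hna, by simpa using hnb, by simpa using hnab⟩

end AuxiliaryPrimes

section NonsquareCriterion

variable {K : Type*} [Field K]

lemma anisotropic_iff_not_isSquare (a : Fin 2 → K) :
    (∀ x : Fin 2 → K, a 0 * x 0 ^ 2 + a 1 * x 1 ^ 2 = 0 → x = 0) ↔
      ¬ IsSquare (-(a 0 * a 1)) := by
  refine ⟨fun h ⟨r, hr⟩ => ?_, fun h x hx => ?_⟩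
  · have h₀ : a 0 = 0 := congr_fun (h ![r, a 0] (by simp; linear_combination -a 0 * hr)) 1
    have h₁ : (1 : K) = 0 := congr_fun (h ![1, 0] (by simp [h₀])) 0
    exact one_ne_zero h₁
  · have h₀ : a 0 ≠ 0 := fun h₀ => h (by simp [h₀])
    have hx₁ : x 1 = 0 := by
      by_contra hx₁
      refine h ⟨a 0 * x 0 / x 1, ?_⟩
      field_simp
      linear_combination -hx
    have hx₀ : x 0 = 0 := by simpa [hx₁, h₀] using hx
    exact funext (Fin.forall_fin_two.mpr ⟨hx₀, hx₁⟩)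

lemma sq_sub_mul_sq_eq_zero_iff {d : K} (hd : ¬ IsSquare d) {x y : K} :
    x ^ 2 - d * y ^ 2 = 0 ↔ x = 0 ∧ y = 0 := by
  refine ⟨fun h => ?_, fun ⟨hx, hy⟩ => by simp [hx, hy]⟩
  have hy : y = 0 := by
    by_contra hy
    refine hd ⟨x / y, ?_⟩
    field_simp
    linear_combination -h
  exact ⟨by simpa [hy] using h, hy⟩

lemma exists_finset_notMem_iff {G : Type*} [Group G] (H : Subgroup G) [H.FiniteIndex] :
    ∃ S : Finset G, ∀ u, u ∉ H ↔ ∃ g ∈ S, ∃ v ∈ H, u = g * v := by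
  classical
  have := Fintype.ofFinite (G ⧸ H)
  refine ⟨(Finset.univ.image fun c : G ⧸ H => c.out).filter (· ∉ H), fun u => ⟨fun hu => ?_, ?_⟩⟩
  · obtain ⟨v, hv⟩ := QuotientGroup.mk_out_eq_mul H u
    have huv : u = (u : G ⧸ H).out * (v : G)⁻¹ := by rw [hv, mul_inv_cancel_right]
    refine ⟨(u : G ⧸ H).out, ?_, (v : G)⁻¹, H.inv_mem v.2, huv⟩
    simpa using fun h => hu (huv ▸ H.mul_mem h (H.inv_mem v.2))
  · rintro ⟨g, hg, v, hv, rfl⟩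
    rw [H.mul_mem_cancel_right hv]
    exact (Finset.mem_filter.mp hg).2

/-- The product of the norm forms of `K(√a)`, `K(√b)` and `K(√ab)`, whose nonzero values form
`pairNormSubgroup a b`. -/
def pairNormForm {R : Type*} [CommRing R] (a b : R) (z : Fin 6 → R) : R :=
  (z 0 ^ 2 - a * z 1 ^ 2) * (z 2 ^ 2 - b * z 3 ^ 2) * (z 4 ^ 2 - a * b * z 5 ^ 2)

lemma map_pairNormForm {R S : Type*} [CommRing R] [CommRing S] (f : R →+* S) (a b : R)
    (z : Fin 6 → R) : f (pairNormForm a b z) = pairNormForm (f a) (f b) (fun i => f (z i)) := by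
  simp only [pairNormForm, map_sub, map_mul, map_pow]

lemma mem_pairNormSubgroup_iff {a b : K} {u : Kˣ} :
    u ∈ pairNormSubgroup a b ↔ ∃ z : Fin 6 → K, (u : K) = pairNormForm a b z := by
  simp only [pairNormSubgroup, Subgroup.mem_sup]
  constructor
  · rintro ⟨_, ⟨u₁, h₁, u₂, h₂, rfl⟩, u₃, h₃, rfl⟩
    obtain ⟨x₁, y₁, h₁⟩ := mem_normFormSubgroup_iff.mp h₁
    obtain ⟨x₂, y₂, h₂⟩ := mem_normFormSubgroup_iff.mp h₂
    obtain ⟨x₃, y₃, h₃⟩ := mem_normFormSubgroup_iff.mp h₃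
    exact ⟨![x₁, y₁, x₂, y₂, x₃, y₃], by rw [Units.val_mul, Units.val_mul, h₁, h₂, h₃]; rfl⟩
  · rintro ⟨z, hu⟩
    have hne : pairNormForm a b z ≠ 0 := hu ▸ u.ne_zero
    have h₁₂ := left_ne_zero_of_mul hne
    have hmem {d x y : K} (h : x ^ 2 - d * y ^ 2 ≠ 0) : Units.mk0 _ h ∈ normFormSubgroup d :=
      mem_normFormSubgroup_iff.mpr ⟨x, y, rfl⟩
    exact ⟨_, ⟨_, hmem (left_ne_zero_of_mul h₁₂), _, hmem (right_ne_zero_of_mul h₁₂), rfl⟩,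
      _, hmem (right_ne_zero_of_mul hne), Units.ext hu.symm⟩

lemma normFormSubgroup_mul_sq_le (d r : K) : normFormSubgroup (d * r ^ 2) ≤ normFormSubgroup d := by
  intro u hu
  obtain ⟨x, y, hu⟩ := mem_normFormSubgroup_iff.mp hu
  exact mem_normFormSubgroup_iff.mpr ⟨x, r * y, by rw [hu]; ring⟩

lemma exists_eq_mul_sq_of_isSquare_mul {c α : K} (hc : c ≠ 0) (h : IsSquare (c * α)) :
    ∃ y, α = c * y ^ 2 := by
  obtain ⟨r, hr⟩ := h
  refine ⟨r / c, ?_⟩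
  field_simp
  linear_combination hr

lemma not_isSquare_of_eq_mul_sq {c α y : K} (hα : α ≠ 0) (hc : ¬ IsSquare c)
    (h : α = c * y ^ 2) : ¬ IsSquare α := by
  have hy : y ≠ 0 := by rintro rfl; exact hα (by simpa using h)
  rintro ⟨r, hr⟩
  refine hc ⟨r / y, ?_⟩
  field_simp
  linear_combination hr - h

lemma not_isSquare_iff_exists_notMem [NumberField K] {a b : ℕ} [Fact a.Prime] [Fact b.Prime]
    (ha : a % 8 = 1) (hb : b % 8 = 1) (hba : (b : ZMod a) = 1) (hna : ¬ IsSquare (a : K))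
    (hnb : ¬ IsSquare (b : K)) (hnab : ¬ IsSquare (a * b : K)) {α : K} :
    ¬ IsSquare α ↔ α ≠ 0 ∧
      ((∃ y : K, α = a * y ^ 2 ∨ α = b * y ^ 2 ∨ α = a * b * y ^ 2) ∨
        ∃ u ∈ normFormSubgroup (a * α), u ∉ pairNormSubgroup (a : K) b) := by
  have ha₀ : (a : K) ≠ 0 := by rintro h; simp [h] at hna
  have hb₀ : (b : K) ≠ 0 := by rintro h; simp [h] at hnb
  constructor
  · intro hα
    refine ⟨by rintro rfl; simp at hα, or_iff_not_imp_left.mpr fun hy => ?_⟩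
    push Not at hy
    have hmul {c : K} (hc : c ≠ 0) (hy : ∀ y, α ≠ c * y ^ 2) : ¬ IsSquare (c * α) := fun h =>
      (exists_eq_mul_sq_of_isSquare_mul hc h).elim hy
    have hcancel {c : K} (h : ¬ IsSquare c) {r : K} (hr : r ≠ 0) : ¬ IsSquare (r ^ 2 * c) :=
      fun hsq => h (by simpa [hr] using hsq.div (IsSquare.sq r))
    refine exists_mem_normFormSubgroup_notMem ha hb hba (hmul ha₀ fun y => (hy y).1) fun c hc => ?_
    obtain rfl | rfl | rfl := hc
    · exact ⟨hna, by convert hcancel hα ha₀ using 2; ring⟩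
    · exact ⟨hnb, by convert hmul (mul_ne_zero ha₀ hb₀) fun y => (hy y).2.2 using 2; ring⟩
    · exact ⟨hnab, by convert hcancel (hmul hb₀ fun y => (hy y).2.1) ha₀ using 2; ring⟩
  · rintro ⟨hα, ⟨y, h | h | h⟩ | ⟨u, hu, huV⟩⟩
    · exact not_isSquare_of_eq_mul_sq hα hna h
    · exact not_isSquare_of_eq_mul_sq hα hnb h
    · exact not_isSquare_of_eq_mul_sq hα hnab h
    · rintro ⟨r, rfl⟩
      rw [← sq] at hu
      exact huV (normFormSubgroup_le_pairNormSubgroup_left _ _ (normFormSubgroup_mul_sq_le _ _ hu))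

lemma exists_finset_not_isSquare_iff [NumberField K] {a b : ℕ} [Fact a.Prime] [Fact b.Prime]
    (ha : a % 8 = 1) (hb : b % 8 = 1) (hba : (b : ZMod a) = 1) (hna : ¬ IsSquare (a : K))
    (hnb : ¬ IsSquare (b : K)) (hnab : ¬ IsSquare (a * b : K)) :
    ∃ G : Finset Kˣ, ∀ α : K, ¬ IsSquare α ↔ ∃ (s y w t : K) (z : Fin 6 → K),
      α * (w ^ 2 - a * α * t ^ 2) * s - 1 = 0 ∧
      (α - a * y ^ 2) * (α - b * y ^ 2) * (α - a * b * y ^ 2) *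
        ∏ g ∈ G, (w ^ 2 - a * α * t ^ 2 - g * pairNormForm (a : K) b z) = 0 := by
  have : (pairNormSubgroup (a : K) b).FiniteIndex := by
    simpa using finiteIndex_pairNormSubgroup (K := K) (a := a) (b := b) (by simpa using hna)
      (by simpa using hnb) (by simpa using hnab)
  obtain ⟨G, hG⟩ := exists_finset_notMem_iff (pairNormSubgroup (a : K) b)
  refine ⟨G, fun α => (not_isSquare_iff_exists_notMem ha hb hba hna hnb hnab).trans ?_⟩
  constructor
  · rintro ⟨hα, ⟨y, hy⟩ | ⟨u, hu, huV⟩⟩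
    · refine ⟨α⁻¹, y, 1, 0, 0, by simp [hα], mul_eq_zero_of_left ?_ _⟩
      simpa [sub_eq_zero, or_assoc] using hy
    · obtain ⟨w, t, hu⟩ := mem_normFormSubgroup_iff.mp hu
      obtain ⟨g, hg, v, hv, rfl⟩ := (hG u).mp huV
      obtain ⟨z, hv⟩ := mem_pairNormSubgroup_iff.mp hv
      refine ⟨(α * (g * v : Kˣ))⁻¹, 0, w, t, z, ?_,
        mul_eq_zero_of_right _ (Finset.prod_eq_zero hg ?_)⟩
      · rw [← hu, mul_inv_cancel₀ (mul_ne_zero hα (Units.ne_zero _)), sub_self]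
      · rw [← hu, ← hv, Units.val_mul, sub_self]
  · rintro ⟨s, y, w, t, z, hs, h⟩
    have hαu := left_ne_zero_of_mul_eq_one (sub_eq_zero.mp hs)
    refine ⟨left_ne_zero_of_mul hαu, ?_⟩
    rcases mul_eq_zero.mp h with h | h
    · exact .inl ⟨y, by simpa [sub_eq_zero, or_assoc] using h⟩
    · obtain ⟨g, hg, hgz⟩ := Finset.prod_eq_zero_iff.mp h
      have hu₀ := right_ne_zero_of_mul hαu
      have hz₀ := right_ne_zero_of_mul (sub_eq_zero.mp hgz ▸ hu₀)
      refine .inr ⟨Units.mk0 _ hu₀, mem_normFormSubgroup_iff.mpr ⟨w, t, rfl⟩, (hG _).mpr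
        ⟨g, hg, Units.mk0 _ hz₀, mem_pairNormSubgroup_iff.mpr ⟨z, rfl⟩, Units.ext ?_⟩⟩
      exact sub_eq_zero.mp hgz

end NonsquareCriterion

section Diophantine

open MvPolynomial

variable {K : Type*} [Field K] {ι : Type*} [Fintype ι]

lemma isDiophantine_of_exists_eval_eq_zero_and {S : Set (ι → K)} {d : K} (hd : ¬ IsSquare d) {m : ℕ}
    {f g : MvPolynomial (ι ⊕ Fin m) K}
    (h : ∀ c, c ∈ S ↔ ∃ x : Fin m → K,
      eval (Sum.elim c x) f = 0 ∧ eval (Sum.elim c x) g = 0) :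
    IsDiophantine S := by
  refine ⟨m, f ^ 2 - C d * g ^ 2, fun c => (h c).trans (exists_congr fun x => ?_)⟩
  simp only [map_sub, map_mul, map_pow, eval_C, sq_sub_mul_sq_eq_zero_iff hd]

theorem isDiophantine_setOf_not_isSquare_eval [NumberField K] (p : MvPolynomial ι K) :
    IsDiophantine {c : ι → K | ¬ IsSquare (eval c p)} := by
  obtain ⟨a, b, ha, hb, ha8, hb8, hba, hna, hnb, hnab⟩ := exists_primes_not_isSquare K
  have := Fact.mk ha
  have := Fact.mk hb
  obtain ⟨G, hG⟩ := exists_finset_not_isSquare_iff ha8 hb8 hba hna hnb hnab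
  let α : MvPolynomial (ι ⊕ Fin (4 + 6)) K := rename Sum.inl p
  let x (i : Fin 4) : MvPolynomial (ι ⊕ Fin (4 + 6)) K := X (.inr (i.castAdd 6))
  let z (i : Fin 6) : MvPolynomial (ι ⊕ Fin (4 + 6)) K := X (.inr (i.natAdd 4))
  refine isDiophantine_of_exists_eval_eq_zero_and hna
    (f := α * (x 2 ^ 2 - C (a : K) * α * x 3 ^ 2) * x 0 - 1)
    (g := (α - C (a : K) * x 1 ^ 2) * (α - C (b : K) * x 1 ^ 2) * (α - C (a * b : K) * x 1 ^ 2) *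
      ∏ g ∈ G, (x 2 ^ 2 - C (a : K) * α * x 3 ^ 2 -
        C (g : K) * pairNormForm (C (a : K)) (C (b : K)) z)) fun c => (hG _).trans ?_
  have hα (v) : eval (Sum.elim c v) α = eval c p := by simp [α, eval_rename]
  have hx (v i) : eval (Sum.elim c v) (x i) = v (i.castAdd 6) := by simp [x]
  have hz (v i) : eval (Sum.elim c v) (z i) = v (i.natAdd 4) := by simp [z]
  simp only [map_sub, map_mul, map_pow, map_prod, map_one, map_pairNormForm, eval_C, hα, hx, hz]
  constructor
  · rintro ⟨s, y, w, t, z, h⟩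
    refine ⟨Fin.append ![s, y, w, t] z, ?_⟩
    simp only [Fin.append_left, Fin.append_right]
    exact h
  · rintro ⟨v, h⟩
    exact ⟨_, _, _, _, _, h⟩

end Diophantine

end BinaryForms

/-- Over a number field `K`, the set of pairs `(a₁, a₂) ∈ K²` such that
`a₁x₁² + a₂x₂² = 0` has only the trivial solution is diophantine over `K`. -/
theorem binary_anisotropic_diophantine_numberField
    (K : Type*) [Field K] [NumberField K] :
    IsDiophantine {a : Fin 2 → K |
      ∀ x : Fin 2 → K, a 0 * x 0 ^ 2 + a 1 * x 1 ^ 2 = 0 → x = 0} := by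
  let p : MvPolynomial (Fin 2) K := -(.X 0 * .X 1)
  have hp (a : Fin 2 → K) : MvPolynomial.eval a p = -(a 0 * a 1) := by simp [p]
  simpa only [BinaryForms.anisotropic_iff_not_isSquare, hp] using
    BinaryForms.isDiophantine_setOf_not_isSquare_eval p
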